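/- arXiv:2004.09104 — 3 statements merged into one kernel-verified Lean document; each statement's English description precedes it below -/
import Mathlib

section
/- Let N ≥ 1 and let ω := {{4j+1,4j+4} : 0≤j≤N−1} ∪ {{4j+2,4j+3} : 0≤j≤N−1}, a planar pair partition of {1,…,4N}. Then for all y_1<⋯<y_{2N}: Σ_β M_{ω,β} · Ẑ_β(y_1,…,y_{2N}) = ∏_{1≤i<j≤2N} (y_j−y_i)^{2(−1)^{j−i}}, where the sum runs over all planar pair partitions β of {1,…,4N} containing no link of the form {2j−1,2j} (1≤j≤2N), and Ẑ_β denotes the fused pure partition function. (This is the total partition function Z_mgff^{(N)} of the metric graph GFF.) -/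
/-!
The matrix `M` is unitriangular for the area order on Dyck paths (`rk_lt`), hence invertible, so
`∑_β M_{ω,β} Z_β = U_ω` before fusion. The steps of `ω` are `+, +, -, -, +, +, -, -, …`, so both points of each
block `{2j-1, 2j}` carry the same step; hence `M_{ω,β} = 0` whenever `β` links the two points of a
block, and `U_ω` divided by the fusion normalization is the product of the factors between
different blocks, which converges to the right-hand side (`Gfun_dbl`). Everything thus reduces to
the existence of the fusion limit of each `Z_α` with `α` free of block links
(`exists_fusion_limit`), which allows exchanging the finite sum with the limit.

A block on which a Dyck path takes two opposite steps contributes a factor `(x_{2j} - x_{2j-1})⁻¹`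
after normalization, and this singularity must cancel in `Z_α`. Extend the row `α` of `M⁻¹` by zero
to all step sequences. If `α` does not link block `j`, this row is antisymmetric under exchanging
two opposite steps of block `j` (`coef_ex`): let `D(β)`, for `β` with a peak at block `j`, be the
sum of the two coefficients. A partition `γ` linking block `j` does not distinguish the two steps
of that block, so `∑_β D(β) M_{β,γ} = (M⁻¹ M)_{α,γ} = 0` for all such `γ`; since the principal
submatrix of `M` on partitions linking block `j` is again unitriangular, `D = 0` (`ker_trivial`).

Consequently, after grouping the step sequences by the set `S` of blocks with opposite steps, the
numerator is an analytic function vanishing whenever the two points of a block in `S` collide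
(`Hfun_vanish`), and an iterated mean value theorem (`exists_quotient`) shows that its quotient by
the product of the gaps over `S` converges.
-/

open Filter Finset
open scoped BigOperators Classical Topology

noncomputable section

/-- The open chamber `x 0 < x 1 < ⋯ < x (n-1)`. -/
def chamber (n : ℕ) : Set (Fin n → ℝ) := {x | ∀ i j : Fin n, i < j → x i < x j}

/-- Planar pair partitions of `{0, …, 2N-1}` (i.e. of `{1,…,2N}` in 1-based labelling),
encoded as noncrossing fixed-point-free involutions: the links are the pairs `{i, f i}`. -/
def PlanarPair (N : ℕ) : Type :=
  {f : Fin (2 * N) → Fin (2 * N) //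
    (∀ i, f (f i) = i) ∧ (∀ i, f i ≠ i) ∧
      ∀ i j, i < j → j < f i → i < f j ∧ f j < f i}

instance (N : ℕ) : Fintype (PlanarPair N) := by
  unfold PlanarPair; infer_instance

/-- The Dyck step sequence of a planar pair partition: `+1` at openers, `-1` at closers. -/
def pairSign {N : ℕ} (α : PlanarPair N) (i : Fin (2 * N)) : ℝ :=
  if i < α.val i then 1 else -1

/-- The conformal block of a sign sequence: `∏_{i<j} (x_j - x_i)^{σ_i σ_j / 2}`. -/
def cblock {n : ℕ} (σ : Fin n → ℝ) (x : Fin n → ℝ) : ℝ :=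
  ∏ p ∈ univ.filter (fun p : Fin n × Fin n => p.1 < p.2),
    (x p.2 - x p.1) ^ (σ p.1 * σ p.2 / 2)

/-- `σ` is the step sequence of a Dyck path. -/
def IsDyck {n : ℕ} (σ : Fin n → ℝ) : Prop :=
  (∀ i, σ i = 1 ∨ σ i = -1) ∧
    (∀ k : Fin n, 0 ≤ ∑ i ∈ univ.filter (fun i : Fin n => i ≤ k), σ i) ∧
    ∑ i, σ i = 0

/-- The relation `α ⟵ β`: every link of `β` joins an opener of `α` to a closer of `α`. -/
def kwRel {N : ℕ} (α β : PlanarPair N) : Prop :=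
  ∀ i, (i < α.val i) ↔ ¬ β.val i < α.val (β.val i)

/-- The incidence matrix `M` of the relation `⟵`. -/
def Mmat (N : ℕ) : Matrix (PlanarPair N) (PlanarPair N) ℝ :=
  fun α β => if kwRel α β then 1 else 0

/-- The κ = 4 pure partition functions `Z_α = Σ_β (M⁻¹)_{α,β} U_β`. -/
def pureZ {N : ℕ} (α : PlanarPair N) (x : Fin (2 * N) → ℝ) : ℝ :=
  ∑ β : PlanarPair N, (Mmat N)⁻¹ α β * cblock (pairSign β) x

/-- Partial derivative in the `i`-th coordinate. -/
def pd {n : ℕ} (i : Fin n) (f : (Fin n → ℝ) → ℝ) : (Fin n → ℝ) → ℝ :=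
  fun x => fderiv ℝ f x (Pi.single i 1)

/-- Doubling a configuration point: the limit point of total fusion. -/
def dup {N : ℕ} (y : Fin (2 * N) → ℝ) : Fin (2 * (2 * N)) → ℝ :=
  fun i => y ⟨i.val / 2, by have := i.2; omega⟩

/-- The fusion normalization `∏_j (x_{2j} - x_{2j-1})^{1/2}`. -/
def fuseDenom {N : ℕ} (x : Fin (2 * (2 * N)) → ℝ) : ℝ :=
  ∏ j : Fin (2 * N),
    (x ⟨2 * j.val + 1, by have := j.2; omega⟩ - x ⟨2 * j.val, by have := j.2; omega⟩) ^
      ((1 : ℝ) / 2)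

/-- `α` contains no link of the form `{2j-1, 2j}` (1-based). -/
def noFuseLink {N : ℕ} (α : PlanarPair (2 * N)) : Prop :=
  ∀ j : Fin (2 * N),
    α.val ⟨2 * j.val, by have := j.2; omega⟩ ≠ ⟨2 * j.val + 1, by have := j.2; omega⟩

/-- The fused pure partition function `Ẑ_α`, defined as the fusion limit. -/
def fusedZ {N : ℕ} (α : PlanarPair (2 * N)) (y : Fin (2 * N) → ℝ) : ℝ :=
  limUnder (𝓝[chamber (2 * (2 * N))] dup y) fun x => pureZ α x / fuseDenom x

/-- The single-fusion of a conformal block with a slope at `j` (0-based `j`, `j+1`);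
the fused point `ξ` sits at coordinate `j`, and coordinate `j+1` is ignored. -/
def Ufuse {n : ℕ} (σ : Fin n → ℝ) (j : ℕ) (hj : j + 1 < n) (x : Fin n → ℝ) : ℝ :=
  (∏ p ∈ univ.filter (fun p : Fin n × Fin n =>
      p.1 < p.2 ∧ p.1.val ≠ j ∧ p.1.val ≠ j + 1 ∧ p.2.val ≠ j ∧ p.2.val ≠ j + 1),
    (x p.2 - x p.1) ^ (σ p.1 * σ p.2 / 2)) *
  ∏ i ∈ univ.filter (fun i : Fin n => i.val ≠ j ∧ i.val ≠ j + 1),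
    |x i - x ⟨j, by omega⟩| ^ (σ i * σ ⟨j, by omega⟩)

/-- The single-fusion `V_{σ/∨_j}` of a conformal block with a local minimum at `j`. -/
def Vfuse {n : ℕ} (σ : Fin n → ℝ) (j : ℕ) (hj : j + 1 < n) (x : Fin n → ℝ) : ℝ :=
  (∏ p ∈ univ.filter (fun p : Fin n × Fin n =>
      p.1 < p.2 ∧ p.1.val ≠ j ∧ p.1.val ≠ j + 1 ∧ p.2.val ≠ j ∧ p.2.val ≠ j + 1),
    (x p.2 - x p.1) ^ (σ p.1 * σ p.2 / 2)) *
  ∑ i ∈ univ.filter (fun i : Fin n => i.val ≠ j ∧ i.val ≠ j + 1),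
    σ i * σ ⟨j, by omega⟩ / (x i - x ⟨j, by omega⟩)

/-- The single-fusion `Z_{α/⨿_j}` of a pure partition function. -/
def Zfuse {N : ℕ} (α : PlanarPair N) (j : ℕ) (hj : j + 1 < 2 * N) (x : Fin (2 * N) → ℝ) : ℝ :=
  (∑ β ∈ univ.filter (fun β : PlanarPair N =>
      pairSign β ⟨j, by omega⟩ = -1 ∧ pairSign β ⟨j + 1, hj⟩ = 1),
    (Mmat N)⁻¹ α β * Vfuse (pairSign β) j hj x) +
  ∑ β ∈ univ.filter (fun β : PlanarPair N =>
      pairSign β ⟨j, by omega⟩ = pairSign β ⟨j + 1, hj⟩),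
    (Mmat N)⁻¹ α β * Ufuse (pairSign β) j hj x

/-- The chamber `x_1 < ⋯ < x_{j-1} < ξ < x_{j+2} < ⋯` for single fusion at `j`:
coordinate `j` carries `ξ` and coordinate `j+1` is ignored. -/
def fusedChamber (n j : ℕ) : Set (Fin n → ℝ) :=
  {x | ∀ k l : Fin n, k < l → k.val ≠ j + 1 → l.val ≠ j + 1 → x k < x l}

/-- Successor inside `Fin n` (identity at the top). -/
def fsucc {n : ℕ} (e : Fin n) : Fin n := if h : e.val + 1 < n then ⟨e.val + 1, h⟩ else e

/-- The set `J_n^m` of permutations from the fusion combinatorics. -/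
def Jset (n m : ℕ) : Finset (Equiv.Perm (Fin n)) :=
  univ.filter fun σ =>
    (∀ k l : Fin n, k.val % 2 = 0 → l.val % 2 = 0 → k.val < l.val → l.val < 2 * m →
      σ k < σ l) ∧
    (∀ k : Fin n, k.val % 2 = 0 → k.val < 2 * m → σ k < σ (fsucc k)) ∧
    ∀ k l : Fin n, 2 * m ≤ k.val → k.val < l.val → σ k < σ l


/-! ### Planar pair partitions and their opener sequences -/

/-- The Boolean step sequence of a planar pair partition: `true` exactly at the openers. -/
def opn {m : ℕ} (α : PlanarPair m) : Fin (2 * m) → Bool := fun i => decide (i < α.val i)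

/-- The real sign attached to a Boolean step. -/
def sg (b : Bool) : ℝ := if b then 1 else -1

lemma sg_not (b : Bool) : sg (!b) = -sg b := by cases b <;> simp [sg]

lemma pairSign_eq {m : ℕ} (α : PlanarPair m) : pairSign α = fun i => sg (opn α i) := by
  funext i
  simp [pairSign, sg, opn]

/-- Extension of the relation `⟵` to an arbitrary step sequence on its left: every link of `γ`
joins two opposite steps of `σ`. -/
def alt {m : ℕ} (σ : Fin (2 * m) → Bool) (γ : PlanarPair m) : Prop :=
  ∀ i, σ (γ.val i) = !σ i

lemma kwRel_iff {m : ℕ} (α β : PlanarPair m) : kwRel α β ↔ alt (opn α) β := by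
  unfold kwRel alt opn
  refine forall_congr' fun i => ?_
  by_cases h1 : i < α.val i <;> by_cases h2 : β.val i < α.val (β.val i) <;> simp [h1, h2]

lemma opn_link {m : ℕ} (γ : PlanarPair m) : alt (opn γ) γ := by
  intro i
  have h1 := γ.2.1 i
  have h2 := γ.2.2.1 i
  unfold opn
  rw [h1]
  rcases lt_or_gt_of_ne h2 with h | h
  · simp [h, not_lt.2 h.le]
  · simp [h, not_lt.2 h.le]

/-- The openers determine a planar pair partition: otherwise look at the largest opener where two
partitions disagree, and use planarity. -/
lemma opn_injective {m : ℕ} : Function.Injective (opn : PlanarPair m → _) := by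
  intro β γ h
  have hs : ∀ i, i < β.val i ↔ i < γ.val i := fun i => by
    have := congrFun h i
    simpa [opn] using this
  have key : ∀ (β γ : PlanarPair m), (∀ i, i < β.val i ↔ i < γ.val i) → ∀ i, i < β.val i →
      (∀ p, i < p → p < β.val p → β.val p = γ.val p) → ¬ β.val i < γ.val i := by
    intro β γ hs i hi ih hlt
    obtain ⟨h1, h2⟩ := γ.2.2.2 i (β.val i) hi hlt
    have hq : ¬ β.val i < γ.val (β.val i) := by
      rw [← hs, β.2.1]
      exact not_lt.2 hi.le
    have hq' : γ.val (β.val i) < β.val i := lt_of_le_of_ne (not_lt.1 hq) (γ.2.2.1 _)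
    have hp : γ.val (β.val i) < β.val (γ.val (β.val i)) := by
      rw [hs, γ.2.1]
      exact hq'
    have h3 := ih _ h1 hp
    rw [γ.2.1] at h3
    have h4 := congrArg β.val h3
    rw [β.2.1, β.2.1] at h4
    exact absurd h4 h1.ne'
  have hop : ∀ k : ℕ, ∀ i : Fin (2 * m), 2 * m - i.val ≤ k → i < β.val i → β.val i = γ.val i := by
    intro k
    induction k with
    | zero => intro i hi; have := i.2; omega
    | succ k ih =>
      intro i hi hlt
      have ih' : ∀ p, i < p → p < β.val p → β.val p = γ.val p := fun p hp =>
        ih p (by have : i.val < p.val := hp; have := p.2; omega)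
      apply le_antisymm
      · exact not_lt.1 (key γ β (fun i => (hs i).symm) i ((hs i).1 hlt)
          fun p hp hp' => (ih' p hp ((hs p).2 hp')).symm)
      · exact not_lt.1 (key β γ hs i hlt ih')
  apply Subtype.ext
  funext i
  rcases lt_or_gt_of_ne (β.2.2.1 i) with hi | hi
  · have h1 := hop _ (β.val i) le_rfl (by rw [β.2.1]; exact hi)
    rw [β.2.1] at h1
    have := congrArg γ.val h1
    rw [γ.2.1] at this
    exact this.symm
  · exact hop _ i le_rfl hi

/-- The sum `∑ σ(i) i`; for the Dyck path of a planar pair partition it is, up to an additive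
constant, minus the area under the path. -/
def rk {m : ℕ} (σ : Fin (2 * m) → Bool) : ℝ := ∑ i, sg (σ i) * (i.val : ℝ)

lemma two_rk {m : ℕ} (σ : Fin (2 * m) → Bool) (γ : PlanarPair m) (h : alt σ γ) :
    2 * rk σ = ∑ i, sg (σ i) * ((i.val : ℝ) - (γ.val i).val) := by
  have h1 : rk σ = ∑ i, sg (σ (γ.val i)) * ((γ.val i).val : ℝ) := by
    unfold rk
    exact (Equiv.sum_comp (Function.Involutive.toPerm γ.val γ.2.1)
      (fun i => sg (σ i) * (i.val : ℝ))).symm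
  rw [two_mul]
  nth_rewrite 2 [h1]
  unfold rk
  rw [← Finset.sum_add_distrib]
  refine Finset.sum_congr rfl fun i _ => ?_
  rw [h i, sg_not]
  ring

/-- The matrix `M` is unitriangular for the area order. -/
lemma rk_lt {m : ℕ} (β γ : PlanarPair m) (h : alt (opn β) γ) (hne : β ≠ γ) :
    rk (opn γ) < rk (opn β) := by
  have h1 := two_rk _ γ h
  have h2 := two_rk _ γ (opn_link γ)
  have hle : ∀ (i : Fin (2 * m)) (b : Bool), sg (opn γ i) * ((i.val : ℝ) - (γ.val i).val) ≤
      sg b * ((i.val : ℝ) - (γ.val i).val) ∧ (b ≠ opn γ i →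
      sg (opn γ i) * ((i.val : ℝ) - (γ.val i).val) < sg b * ((i.val : ℝ) - (γ.val i).val)) := by
    intro i b
    rcases lt_or_gt_of_ne (γ.2.2.1 i) with hi | hi
    · have hb : opn γ i = false := by simp [opn, hi.le]
      have : ((γ.val i).val : ℝ) < i.val := by exact_mod_cast hi
      rw [hb]
      cases b <;> simp [sg] <;> constructor <;> linarith
    · have hb : opn γ i = true := by simp [opn, hi]
      have : (i.val : ℝ) < (γ.val i).val := by exact_mod_cast hi
      rw [hb]
      cases b <;> simp [sg] <;> constructor <;> linarith
  obtain ⟨i, hi⟩ : ∃ i, opn β i ≠ opn γ i := by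
    by_contra! hcon
    exact hne (opn_injective (funext hcon))
  have : ∑ i, sg (opn γ i) * ((i.val : ℝ) - (γ.val i).val) <
      ∑ i, sg (opn β i) * ((i.val : ℝ) - (γ.val i).val) :=
    Finset.sum_lt_sum (fun i _ => (hle i _).1) ⟨i, Finset.mem_univ _, (hle i _).2 hi⟩
  linarith

/-- Every principal submatrix of `M` has trivial left kernel. -/
lemma ker_trivial {m : ℕ} (P : PlanarPair m → Prop) (d : PlanarPair m → ℝ)
    (hd : ∀ β, ¬ P β → d β = 0)
    (h : ∀ γ, P γ → ∑ β, d β * Mmat m β γ = 0) : ∀ β, d β = 0 := by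
  by_contra! hcon
  obtain ⟨β₁, hβ₁⟩ := hcon
  obtain ⟨γ, hγ, hmax⟩ := Finset.exists_max_image (univ.filter fun β => d β ≠ 0)
    (fun β => rk (opn β)) ⟨β₁, by simp [hβ₁]⟩
  have hγ0 : d γ ≠ 0 := by simpa using hγ
  have hP : P γ := by
    by_contra hP
    exact hγ0 (hd γ hP)
  have hsum := h γ hP
  rw [Finset.sum_eq_single γ] at hsum
  · have : Mmat m γ γ = 1 := by
      unfold Mmat
      rw [if_pos ((kwRel_iff _ _).2 (opn_link γ))]
    rw [this, mul_one] at hsum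
    exact hγ0 hsum
  · intro β _ hne
    by_cases hb : d β = 0
    · simp [hb]
    · unfold Mmat
      rw [if_neg, mul_zero]
      intro hk
      have h1 := rk_lt β γ ((kwRel_iff _ _).1 hk) hne
      have h2 := hmax β (by simp [hb])
      linarith
  · simp

lemma isUnit_Mmat (m : ℕ) : IsUnit (Mmat m) := by
  rw [← Matrix.vecMul_injective_iff_isUnit]
  intro v w hvw
  have h : ∀ β, (v - w) β = 0 := by
    refine ker_trivial (fun _ => True) _ (by simp) fun γ _ => ?_
    have h1 : Matrix.vecMul (v - w) (Mmat m) γ = 0 := by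
      rw [Matrix.sub_vecMul]
      simp only at hvw
      rw [hvw]; simp
    simpa [Matrix.vecMul, dotProduct] using h1
  funext β
  have := h β
  simpa [sub_eq_zero] using this

lemma det_Mmat (m : ℕ) : IsUnit (Mmat m).det := (Matrix.isUnit_iff_isUnit_det _).1 (isUnit_Mmat m)

lemma inv_mul_Mmat {m : ℕ} (α γ : PlanarPair m) :
    ∑ β, (Mmat m)⁻¹ α β * Mmat m β γ = if α = γ then 1 else 0 := by
  have := congrFun (congrFun (Matrix.nonsing_inv_mul (Mmat m) (det_Mmat m)) α) γ
  rw [Matrix.mul_apply, Matrix.one_apply] at this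
  rw [this]

lemma sum_Mmat_pureZ {m : ℕ} (α : PlanarPair m) (x : Fin (2 * m) → ℝ) :
    ∑ β, Mmat m α β * pureZ β x = cblock (pairSign α) x := by
  unfold pureZ
  simp_rw [Finset.mul_sum]
  rw [Finset.sum_comm]
  simp_rw [← mul_assoc, ← Finset.sum_mul]
  have : ∀ γ, ∑ β, Mmat m α β * (Mmat m)⁻¹ β γ = if α = γ then 1 else 0 := by
    intro γ
    have := congrFun (congrFun (Matrix.mul_nonsing_inv (Mmat m) (det_Mmat m)) α) γ
    rw [Matrix.mul_apply, Matrix.one_apply] at this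
    rw [this]
  simp [this]

/-! ### Antisymmetry of the inverse matrix under exchange of the two steps of a block -/

/-- Left point of the `j`-th block `{2j, 2j+1}` (0-based). -/
def bL {m : ℕ} (j : Fin m) : Fin (2 * m) := ⟨2 * j.val, by have := j.2; omega⟩

/-- Right point of the `j`-th block `{2j, 2j+1}` (0-based). -/
def bR {m : ℕ} (j : Fin m) : Fin (2 * m) := ⟨2 * j.val + 1, by have := j.2; omega⟩

lemma bL_lt_bR {m : ℕ} (j : Fin m) : bL j < bR j := by
  show 2 * j.val < 2 * j.val + 1
  omega

/-- The transposition exchanging the two points of a block. -/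
def ex {m : ℕ} (j : Fin m) : Equiv.Perm (Fin (2 * m)) := Equiv.swap (bL j) (bR j)

lemma peak_link {m : ℕ} (β : PlanarPair m) (j : Fin m) (h1 : opn β (bL j) = true)
    (h2 : opn β (bR j) = false) : β.val (bL j) = bR j := by
  simp only [opn, decide_eq_true_eq, decide_eq_false_iff_not, not_lt] at h1 h2
  by_contra hne
  have hlt : bR j < β.val (bL j) := by
    have h1' : 2 * j.val < (β.val (bL j)).val := h1
    have h3 : (β.val (bL j)).val ≠ 2 * j.val + 1 := fun h => hne (Fin.ext h)
    show 2 * j.val + 1 < (β.val (bL j)).val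
    omega
  have h3 : 2 * j.val < (β.val (bR j)).val := (β.2.2.2 _ _ (bL_lt_bR j) hlt).1
  have h4 : (β.val (bR j)).val ≤ 2 * j.val + 1 := h2
  exact β.2.2.1 (bR j) (Fin.ext (show (β.val (bR j)).val = 2 * j.val + 1 by omega))

/-- A valley of a Dyck path can be flipped into a peak: the links `{p,2j}`, `{2j+1,q}` are
replaced with `{2j,2j+1}`, `{p,q}`. -/
lemma exists_flip {m : ℕ} (β : PlanarPair m) (j : Fin m) (h1 : opn β (bL j) = false)
    (h2 : opn β (bR j) = true) : ∃ γ : PlanarPair m, opn γ = opn β ∘ ex j := by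
  simp only [opn, decide_eq_true_eq, decide_eq_false_iff_not, not_lt] at h1 h2
  have hab : ∀ i : Fin (2 * m), bL j < i → i ≠ bR j → bR j < i := by
    intro i hi hne
    have h3 : i.val ≠ 2 * j.val + 1 := fun h => hne (Fin.ext h)
    have hi' : 2 * j.val < i.val := hi
    show 2 * j.val + 1 < i.val
    omega
  have hlt := bL_lt_bR j
  have hinv := β.2.1
  have hfix := β.2.2.1
  have hnc := β.2.2.2
  unfold opn ex
  generalize bL j = a at *
  generalize bR j = b at *
  generalize β.val = f at *
  have hpa : f a < a := lt_of_le_of_ne h1 (hfix a)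
  let g : Fin (2 * m) → Fin (2 * m) := fun i =>
    if i = a then b else if i = b then a else if i = f a then f b else if i = f b then f a else f i
  have hg : ∀ i, g i =
    if i = a then b else if i = b then a else if i = f a then f b else if i = f b then f a
      else f i := fun i => rfl
  refine ⟨⟨g, ?_, ?_, ?_⟩, ?_⟩
  · intro i
    grind
  · intro i
    grind
  · intro i k hik hk
    have n1 := hnc i k hik
    have n2 := hnc i a
    have n3 := hnc i b
    have n4 := hnc i (f a)
    have n5 := hnc i (f b)
    have n6 := hnc (f a) k
    have n7 := hnc b k
    have ei := hinv i
    have ek := hinv k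
    have ea := hinv a
    have eb := hinv b
    have hki := hab k
    have hfi := hab (f i)
    have hii := hab i
    have hfk := hab (f k)
    have gi := hg i
    have gk := hg k
    clear hnc hab hinv hg
    rw [ea] at n4 n6
    rw [eb] at n5
    clear_value g
    by_cases i1 : i = a
    · grind
    by_cases i2 : i = b
    · grind
    by_cases i3 : i = f a
    · subst i3
      rw [if_neg i1, if_neg i2, if_pos rfl] at gi
      rw [gi] at hk ⊢
      by_cases k1 : k = a
      · grind
      by_cases k2 : k = b
      · grind
      grind
    by_cases i4 : i = f b
    · grind
    rw [if_neg i1, if_neg i2, if_neg i3, if_neg i4] at gi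
    rw [gi] at hk ⊢
    have fi1 : f i ≠ a := fun h => i3 (by rw [← h, ei])
    have fi2 : f i ≠ b := fun h => i4 (by rw [← h, ei])
    by_cases k1 : k = a
    · grind
    by_cases k2 : k = b
    · grind
    by_cases k3 : k = f a
    · grind
    by_cases k4 : k = f b
    · grind
    grind
  · funext i
    show decide (i < g i) = decide (Equiv.swap a b i < f (Equiv.swap a b i))
    rw [decide_eq_decide, Equiv.swap_apply_def]
    grind

/-- The row `α` of `M⁻¹`, extended by zero to all step sequences. -/
def coef {m : ℕ} (α : PlanarPair m) (σ : Fin (2 * m) → Bool) : ℝ :=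
  ∑ β, if opn β = σ then (Mmat m)⁻¹ α β else 0

lemma coef_opn {m : ℕ} (α β : PlanarPair m) : coef α (opn β) = (Mmat m)⁻¹ α β := by
  unfold coef
  rw [Finset.sum_eq_single β]
  · simp
  · intro γ _ hne
    rw [if_neg fun h => hne (opn_injective h)]
  · simp

lemma coef_ne_zero {m : ℕ} {α : PlanarPair m} {σ : Fin (2 * m) → Bool} (h : coef α σ ≠ 0) :
    ∃ β, opn β = σ := by
  by_contra! hcon
  exact h (Finset.sum_eq_zero fun β _ => if_neg (hcon β))

lemma sum_coef {m : ℕ} (α : PlanarPair m) (F : (Fin (2 * m) → Bool) → ℝ) :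
    ∑ σ, coef α σ * F σ = ∑ β, (Mmat m)⁻¹ α β * F (opn β) := by
  unfold coef
  simp_rw [Finset.sum_mul]
  rw [Finset.sum_comm]
  refine Finset.sum_congr rfl fun β _ => ?_
  simp

lemma ex_bL {m : ℕ} (j : Fin m) : ex j (bL j) = bR j := Equiv.swap_apply_left _ _

lemma ex_bR {m : ℕ} (j : Fin m) : ex j (bR j) = bL j := Equiv.swap_apply_right _ _

lemma ex_ex {m : ℕ} (j : Fin m) (i) : ex j (ex j i) = i := Equiv.swap_apply_self _ _ _

/-- If `γ` contains the link of block `j`, exchanging the steps of that block does not affect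
compatibility with `γ`. -/
lemma alt_ex {m : ℕ} (j : Fin m) (σ : Fin (2 * m) → Bool) (γ : PlanarPair m)
    (hγ : γ.val (bL j) = bR j) (h : alt σ γ) : alt (σ ∘ ex j) γ := by
  have hγ' : γ.val (bR j) = bL j := by rw [← hγ, γ.2.1]
  have hc : ∀ i, ex j (γ.val i) = γ.val (ex j i) := by
    intro i
    have hinv := γ.2.1
    unfold ex
    rw [Equiv.swap_apply_def, Equiv.swap_apply_def]
    grind
  intro i
  simp only [Function.comp]
  rw [hc, h]

/-- Key cancellation: if `α` does not contain the link of block `j`, the extended row `α` of `M⁻¹`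
changes sign when the two opposite steps of that block are exchanged. -/
lemma coef_ex {m : ℕ} (α : PlanarPair m) (j : Fin m) (hα : α.val (bL j) ≠ bR j)
    (σ : Fin (2 * m) → Bool) (hσ : σ (bL j) ≠ σ (bR j)) : coef α (σ ∘ ex j) = -coef α σ := by
  have hexex : ∀ τ : Fin (2 * m) → Bool, (τ ∘ ex j) ∘ ex j = τ := by
    intro τ; funext i; simp [ex_ex]
  let D : PlanarPair m → ℝ := fun β => if β.val (bL j) = bR j then
    coef α (opn β) + coef α (opn β ∘ ex j) else 0
  have hopL : ∀ β : PlanarPair m, β.val (bL j) = bR j → opn β (bL j) = true ∧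
      opn β (bR j) = false := by
    intro β hβ
    have h1 : opn β (bL j) = true := by simp [opn, hβ, bL_lt_bR]
    refine ⟨h1, ?_⟩
    have := opn_link β (bL j)
    rw [hβ, h1] at this
    simpa using this
  have hD : ∀ β, D β = 0 := by
    refine ker_trivial (fun β => β.val (bL j) = bR j) D (fun β hβ => if_neg hβ) fun γ hγ => ?_
    -- The indicator of compatibility with `γ`, on all step sequences.
    let A : (Fin (2 * m) → Bool) → ℝ := fun σ => if alt σ γ then 1 else 0
    have hA : ∀ β, Mmat m β γ = A (opn β) := fun β => by
      simp only [Mmat, A, kwRel_iff]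
    have hAex : ∀ τ, A (τ ∘ ex j) = A τ := by
      intro τ
      have : alt (τ ∘ ex j) γ ↔ alt τ γ :=
        ⟨fun h => by simpa [hexex] using alt_ex j _ γ hγ h, alt_ex j τ γ hγ⟩
      simp only [A, this]
    have hA0 : ∀ τ, τ (bL j) = τ (bR j) → A τ = 0 := by
      intro τ hτ
      refine if_neg fun h => ?_
      have := h (bL j)
      rw [hγ, hτ] at this
      simp at this
    have h0 : ∑ τ, coef α τ * A τ = 0 := by
      rw [sum_coef]
      simp_rw [← hA]
      rw [inv_mul_Mmat, if_neg]
      rintro rfl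
      exact hα hγ
    -- Step sequences with a peak at block `j`.
    let pk : (Fin (2 * m) → Bool) → ℝ := fun τ => if τ (bL j) = true ∧ τ (bR j) = false then 1 else 0
    have hsplit : ∀ τ, coef α τ * A τ =
        pk τ * (coef α τ * A τ) + pk (τ ∘ ex j) * (coef α τ * A τ) := by
      intro τ
      by_cases hτ : τ (bL j) = τ (bR j)
      · simp [hA0 τ hτ]
      · simp only [pk, Function.comp, ex_bL, ex_bR]
        cases h1 : τ (bL j) <;> cases h2 : τ (bR j) <;> simp_all
    have h3 : ∑ τ, pk τ * (coef α τ + coef α (τ ∘ ex j)) * A τ = 0 := by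
      rw [← h0, Finset.sum_congr rfl fun τ _ => hsplit τ, Finset.sum_add_distrib]
      have : ∑ τ : Fin (2 * m) → Bool, pk (τ ∘ ex j) * (coef α τ * A τ) =
          ∑ τ, pk τ * (coef α (τ ∘ ex j) * A τ) := by
        have hi : Function.Involutive fun τ : Fin (2 * m) → Bool => τ ∘ ex j := hexex
        rw [← Equiv.sum_comp hi.toPerm]
        refine Finset.sum_congr rfl fun τ _ => ?_
        simp only [Function.Involutive.coe_toPerm, hexex, hAex]
      rw [this, ← Finset.sum_add_distrib]
      refine Finset.sum_congr rfl fun τ _ => ?_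
      ring
    -- The summand is supported on opener sequences.
    have h4 : ∑ τ, pk τ * (coef α τ + coef α (τ ∘ ex j)) * A τ =
        ∑ τ ∈ univ.image (opn : PlanarPair m → _),
          pk τ * (coef α τ + coef α (τ ∘ ex j)) * A τ := by
      symm
      refine Finset.sum_subset (Finset.subset_univ _) fun τ _ hτ => ?_
      have hτ' : ∀ β, opn β ≠ τ := by simpa using hτ
      by_cases hp : τ (bL j) = true ∧ τ (bR j) = false
      · have e1 : coef α τ = 0 := by
          by_contra hne
          obtain ⟨β, hβ⟩ := coef_ne_zero hne
          exact hτ' β hβ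
        have e2 : coef α (τ ∘ ex j) = 0 := by
          by_contra hne
          obtain ⟨β, hβ⟩ := coef_ne_zero hne
          obtain ⟨β', hβ'⟩ := exists_flip β j (by rw [hβ]; simp [ex_bL, hp.2])
            (by rw [hβ]; simp [ex_bR, hp.1])
          rw [hβ, hexex] at hβ'
          exact hτ' β' hβ'
        simp [e1, e2]
      · simp [pk, hp]
    rw [h4, Finset.sum_image (fun _ _ _ _ h => opn_injective h)] at h3
    rw [← h3]
    refine Finset.sum_congr rfl fun β _ => ?_
    rw [hA]
    congr 1
    by_cases hβ : β.val (bL j) = bR j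
    · simp only [D, pk]
      rw [if_pos hβ, if_pos (hopL β hβ), one_mul]
    · simp only [D, pk]
      rw [if_neg hβ, if_neg fun h => hβ (peak_link β j h.1 h.2), zero_mul]
  have main : ∀ τ : Fin (2 * m) → Bool, τ (bL j) = true → τ (bR j) = false →
      coef α τ + coef α (τ ∘ ex j) = 0 := by
    intro τ hl hr
    by_contra hne
    have : ∃ β, opn β = τ := by
      by_cases h1 : coef α τ = 0
      · rw [h1, zero_add] at hne
        obtain ⟨β, hβ⟩ := coef_ne_zero hne
        obtain ⟨β', hβ'⟩ := exists_flip β j (by rw [hβ]; simp [ex_bL, hr])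
          (by rw [hβ]; simp [ex_bR, hl])
        rw [hβ, hexex] at hβ'
        exact ⟨β', hβ'⟩
      · exact coef_ne_zero h1
    obtain ⟨β, rfl⟩ := this
    have h5 := hD β
    simp only [D] at h5
    rw [if_pos (peak_link β j hl hr)] at h5
    exact hne h5
  cases h1 : σ (bL j) <;> cases h2 : σ (bR j)
  · simp_all
  · have := main (σ ∘ ex j) (by simp [ex_bL, h2]) (by simp [ex_bR, h1])
    rw [hexex] at this
    linarith
  · have := main σ h1 h2
    linarith
  · simp_all

/-! ### Division by the block gaps -/

/-- Moving the right point of a block to a position between its two points does not move the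
configuration away from a centre at which the two points coincide. -/
lemma dist_update_le {m : ℕ} (x₀ x : Fin (2 * m) → ℝ) (j : Fin m)
    (hx₀ : x₀ (bL j) = x₀ (bR j)) (t : ℝ) (h1 : x (bL j) ≤ t) (h2 : t ≤ x (bR j)) :
    dist (Function.update x (bR j) t) x₀ ≤ dist x x₀ := by
  rw [dist_pi_le_iff dist_nonneg]
  intro i
  by_cases hi : i = bR j
  · subst hi
    rw [Function.update_self]
    have e1 := dist_le_pi_dist x x₀ (bL j)
    have e2 := dist_le_pi_dist x x₀ (bR j)
    rw [Real.dist_eq] at e1 e2 ⊢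
    rw [hx₀] at e1
    rw [abs_le] at e1 e2 ⊢
    constructor <;> linarith [e1.1, e2.2]
  · rw [Function.update_of_ne hi]
    exact dist_le_pi_dist x x₀ i

lemma bR_ne_bR {m : ℕ} {i j : Fin m} (h : i ≠ j) : bR i ≠ bR j := fun h' => by
  have : 2 * i.val + 1 = 2 * j.val + 1 := congrArg Fin.val h'
  exact h (Fin.ext (by omega))

lemma bL_ne_bR {m : ℕ} (i j : Fin m) : bL i ≠ bR j := fun h' => by
  have : 2 * i.val = 2 * j.val + 1 := congrArg Fin.val h'
  omega

lemma hasDerivAt_line {n : ℕ} {x₀ : Fin n → ℝ} {r : ℝ} {H : (Fin n → ℝ) → ℝ}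
    (hH : ContDiffOn ℝ ⊤ H (Metric.ball x₀ r)) (x : Fin n → ℝ) (i : Fin n) (t : ℝ)
    (ht : Function.update x i t ∈ Metric.ball x₀ r) :
    HasDerivAt (fun s => H (Function.update x i s)) (pd i H (Function.update x i t)) t := by
  have h1 : DifferentiableAt ℝ H (Function.update x i t) :=
    (hH.contDiffAt (Metric.isOpen_ball.mem_nhds ht)).differentiableAt (by simp)
  exact h1.hasFDerivAt.comp_hasDerivAt t (hasDerivAt_update x i t)

/-- Iterated mean value theorem: an analytic function (`⊤` is the analytic smoothness exponent) on
a box (a ball of the sup norm), vanishing whenever the two points of some block in `S` collide, is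
the product of the block gaps with a continuous function evaluated at a point at least as close to
the centre. -/
lemma exists_quotient {m : ℕ} (x₀ : Fin (2 * m) → ℝ) (hx₀ : ∀ j, x₀ (bL j) = x₀ (bR j)) (r : ℝ)
    (S : Finset (Fin m)) : ∀ H : (Fin (2 * m) → ℝ) → ℝ, ContDiffOn ℝ ⊤ H (Metric.ball x₀ r) →
    (∀ j ∈ S, ∀ x ∈ Metric.ball x₀ r, x (bL j) = x (bR j) → H x = 0) →
    ∃ D : (Fin (2 * m) → ℝ) → ℝ, ContinuousOn D (Metric.ball x₀ r) ∧
      ∀ x ∈ Metric.ball x₀ r, (∀ j ∈ S, x (bL j) < x (bR j)) →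
        ∃ ξ, dist ξ x₀ ≤ dist x x₀ ∧ H x = D ξ * ∏ j ∈ S, (x (bR j) - x (bL j)) := by
  induction S using Finset.induction_on with
  | empty =>
    intro H hH _
    exact ⟨H, hH.continuousOn, fun x _ _ => ⟨x, le_rfl, by simp⟩⟩
  | insert j S hj ih =>
    intro H hH hvan
    have hdiff : ContDiffOn ℝ ⊤ (pd (bR j) H) (Metric.ball x₀ r) :=
      (hH.fderiv_of_isOpen Metric.isOpen_ball (by simp)).clm_apply contDiffOn_const
    have hvan' : ∀ i ∈ S, ∀ x ∈ Metric.ball x₀ r, x (bL i) = x (bR i) → pd (bR j) H x = 0 := by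
      intro i hi x hx hxi
      have hij : i ≠ j := fun h => hj (h ▸ hi)
      have hup : Function.update x (bR j) (x (bR j)) = x := Function.update_eq_self _ _
      have h1 := hasDerivAt_line hH x (bR j) (x (bR j)) (by rw [hup]; exact hx)
      rw [hup] at h1
      have hev : ∀ᶠ s in 𝓝 (x (bR j)), Function.update x (bR j) s ∈ Metric.ball x₀ r := by
        have hc : ContinuousAt (Function.update x (bR j)) (x (bR j)) :=
          (hasDerivAt_update x (bR j) _).continuousAt
        refine hc.eventually_mem ?_
        rw [hup]
        exact Metric.isOpen_ball.mem_nhds hx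
      have h2 : HasDerivAt (fun s => H (Function.update x (bR j) s)) 0 (x (bR j)) := by
        refine (hasDerivAt_const _ (0 : ℝ)).congr_of_eventuallyEq ?_
        filter_upwards [hev] with s hs
        refine hvan i (Finset.mem_insert_of_mem hi) _ hs ?_
        rw [Function.update_of_ne (bL_ne_bR i j), Function.update_of_ne (bR_ne_bR hij), hxi]
      exact h1.unique h2
    obtain ⟨D, hD, hDx⟩ := ih _ hdiff hvan'
    refine ⟨D, hD, fun x hx hlt => ?_⟩
    have hjlt := hlt j (Finset.mem_insert_self _ _)
    have hball : ∀ t ∈ Set.Icc (x (bL j)) (x (bR j)),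
        Function.update x (bR j) t ∈ Metric.ball x₀ r := fun t ht =>
      lt_of_le_of_lt (dist_update_le x₀ x j (hx₀ j) t ht.1 ht.2) hx
    obtain ⟨c, hc, hslope⟩ := exists_hasDerivAt_eq_slope
      (fun s => H (Function.update x (bR j) s)) (fun s => pd (bR j) H (Function.update x (bR j) s))
      hjlt
      (fun t ht => (hasDerivAt_line hH x (bR j) t (hball t ht)).continuousAt.continuousWithinAt)
      (fun t ht => hasDerivAt_line hH x (bR j) t (hball t (Set.Ioo_subset_Icc_self ht)))
    have hcc := Set.Ioo_subset_Icc_self hc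
    have hzero : H (Function.update x (bR j) (x (bL j))) = 0 := by
      refine hvan j (Finset.mem_insert_self _ _) _ (hball _ (Set.left_mem_Icc.2 hjlt.le)) ?_
      rw [Function.update_of_ne (bL_ne_bR j j), Function.update_self]
    have hagree : ∀ i ∈ S, Function.update x (bR j) c (bL i) = x (bL i) ∧
        Function.update x (bR j) c (bR i) = x (bR i) := fun i hi =>
      ⟨Function.update_of_ne (bL_ne_bR i j) _ _,
        Function.update_of_ne (bR_ne_bR fun h : i = j => hj (h ▸ hi)) _ _⟩
    obtain ⟨ξ, hξ, hξ'⟩ := hDx _ (hball c hcc) (fun i hi => by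
      rw [(hagree i hi).1, (hagree i hi).2]
      exact hlt i (Finset.mem_insert_of_mem hi))
    refine ⟨ξ, hξ.trans (dist_update_le x₀ x j (hx₀ j) c hcc.1 hcc.2), ?_⟩
    simp only [hzero, Function.update_eq_self, sub_zero] at hslope
    rw [Finset.prod_insert hj]
    have hprod : ∏ i ∈ S, (Function.update x (bR j) c (bR i) - Function.update x (bR j) c (bL i)) =
        ∏ i ∈ S, (x (bR i) - x (bL i)) :=
      Finset.prod_congr rfl fun i hi => by rw [(hagree i hi).1, (hagree i hi).2]
    rw [hprod, hslope, div_eq_iff (sub_pos.2 hjlt).ne'] at hξ'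
    rw [hξ']
    ring

lemma exists_tendsto_quotient {m : ℕ} (x₀ : Fin (2 * m) → ℝ)
    (hx₀ : ∀ j, x₀ (bL j) = x₀ (bR j)) (r : ℝ) (hr : 0 < r) (S : Finset (Fin m))
    (H : (Fin (2 * m) → ℝ) → ℝ) (hH : ContDiffOn ℝ ⊤ H (Metric.ball x₀ r))
    (hvan : ∀ j ∈ S, ∀ x ∈ Metric.ball x₀ r, x (bL j) = x (bR j) → H x = 0) :
    ∃ L, Tendsto (fun x => H x / ∏ j ∈ S, (x (bR j) - x (bL j)))
      (𝓝[chamber (2 * m)] x₀) (𝓝 L) := by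
  obtain ⟨D, hD, hDx⟩ := exists_quotient x₀ hx₀ r S H hH hvan
  refine ⟨D x₀, ?_⟩
  have hch : ∀ x ∈ chamber (2 * m), ∀ j ∈ S, x (bL j) < x (bR j) :=
    fun x hx j _ => hx _ _ (bL_lt_bR j)
  have hcont : ContinuousAt D x₀ := hD.continuousAt (Metric.ball_mem_nhds _ hr)
  rw [Metric.tendsto_nhds]
  intro ε hε
  obtain ⟨δ, hδ, hDδ⟩ := Metric.continuousAt_iff.1 hcont ε hε
  filter_upwards [self_mem_nhdsWithin,
    mem_nhdsWithin_of_mem_nhds (Metric.ball_mem_nhds x₀ hr),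
    mem_nhdsWithin_of_mem_nhds (Metric.ball_mem_nhds x₀ hδ)] with x hx hxr hxδ
  obtain ⟨ξ, hξ, hξ'⟩ := hDx x hxr (hch x hx)
  have hpos : 0 < ∏ j ∈ S, (x (bR j) - x (bL j)) :=
    Finset.prod_pos fun j hj => sub_pos.2 (hch x hx j hj)
  rw [hξ', mul_div_assoc, div_self hpos.ne', mul_one]
  exact hDδ (lt_of_le_of_lt hξ hxδ)

/-! ### Fusion of conformal blocks -/

/-- The part of the conformal block coming from pairs of points in different blocks. -/
def Gfun {m : ℕ} (σ : Fin (2 * m) → Bool) (x : Fin (2 * m) → ℝ) : ℝ :=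
  ∏ p ∈ univ.filter (fun p : Fin (2 * m) × Fin (2 * m) => p.1.val / 2 < p.2.val / 2),
    (x p.2 - x p.1) ^ (sg (σ p.1) * sg (σ p.2) / 2)

/-- Configurations whose blocks are separated and ordered. -/
def sep (m : ℕ) : Set (Fin (2 * m) → ℝ) := {x | ∀ p q, p.val / 2 < q.val / 2 → x p < x q}

lemma isOpen_sep (m : ℕ) : IsOpen (sep m) := by
  have : sep m = ⋂ p : Fin (2 * m), ⋂ q : Fin (2 * m), {x | p.val / 2 < q.val / 2 → x p < x q} := by
    ext x; simp [sep]
  rw [this]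
  refine isOpen_iInter_of_finite fun p => isOpen_iInter_of_finite fun q => ?_
  by_cases h : p.val / 2 < q.val / 2
  · simp only [h, true_implies]
    exact isOpen_lt (continuous_apply p) (continuous_apply q)
  · simp [h]

lemma contDiffOn_Gfun {m : ℕ} (σ : Fin (2 * m) → Bool) : ContDiffOn ℝ ⊤ (Gfun σ) (sep m) := by
  unfold Gfun
  refine contDiffOn_prod fun p hp => ?_
  have hp' : p.1.val / 2 < p.2.val / 2 := by simpa using hp
  refine ContDiffOn.rpow_const_of_ne ?_ fun x hx => (sub_pos.2 (hx _ _ hp')).ne'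
  exact ContDiff.contDiffOn (by fun_prop)

lemma cblock_eq {m : ℕ} (σ : Fin (2 * m) → Bool) (x : Fin (2 * m) → ℝ) :
    cblock (fun i => sg (σ i)) x =
      (∏ j, (x (bR j) - x (bL j)) ^ (sg (σ (bL j)) * sg (σ (bR j)) / 2)) * Gfun σ x := by
  unfold cblock Gfun
  rw [← Finset.prod_filter_mul_prod_filter_not _
    (fun p : Fin (2 * m) × Fin (2 * m) => p.1.val / 2 < p.2.val / 2), mul_comm,
    Finset.filter_filter, Finset.filter_filter]
  congr 1
  · symm
    refine Finset.prod_bij' (fun j _ => (bL j, bR j))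
      (fun p _ => ⟨p.1.val / 2, by have := p.1.2; omega⟩) ?_ ?_ ?_ ?_ ?_
    · intro j _
      simp only [mem_filter, mem_univ, true_and, bL_lt_bR]
      simp only [bL, bR]
      omega
    · simp
    · intro j _
      apply Fin.ext
      simp only [bL]
      omega
    · rintro ⟨p, q⟩ hp
      simp only [mem_filter, mem_univ, true_and] at hp
      have hlt : p.val < q.val := hp.1
      have hge := hp.2
      ext <;> simp only [bL, bR] <;> omega
    · intros
      rfl
  · refine Finset.prod_congr ?_ fun _ _ => rfl
    ext ⟨p, q⟩
    simp only [mem_filter, mem_univ, true_and]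
    constructor
    · exact fun h => h.2
    · intro h
      refine ⟨?_, h⟩
      show p.val < q.val
      omega

lemma ex_div {m : ℕ} (j : Fin m) (i : Fin (2 * m)) : (ex j i).val / 2 = i.val / 2 := by
  unfold ex
  rw [Equiv.swap_apply_def]
  split_ifs with h1 h2
  · subst h1; simp only [bL, bR]; omega
  · subst h2; simp only [bL, bR]; omega
  · rfl

lemma Gfun_ex {m : ℕ} (σ : Fin (2 * m) → Bool) (x : Fin (2 * m) → ℝ) (j : Fin m)
    (hx : x (bL j) = x (bR j)) : Gfun (σ ∘ ex j) x = Gfun σ x := by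
  have hxe : ∀ i, x (ex j i) = x i := by
    intro i
    unfold ex
    rw [Equiv.swap_apply_def]
    split_ifs with h1 h2
    · rw [h1, hx]
    · rw [h2, hx]
    · rfl
  unfold Gfun
  refine Finset.prod_bij' (fun p _ => (ex j p.1, ex j p.2)) (fun p _ => (ex j p.1, ex j p.2))
    ?_ ?_ ?_ ?_ ?_
  · intro p hp
    simpa [ex_div] using hp
  · intro p hp
    simpa [ex_div] using hp
  · intro p _
    simp [ex_ex]
  · intro p _
    simp [ex_ex]
  · intro p _
    simp [hxe]

/-- The blocks on which a step sequence takes two opposite steps. -/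
def mix {m : ℕ} (σ : Fin (2 * m) → Bool) : Finset (Fin m) :=
  univ.filter fun j => σ (bL j) ≠ σ (bR j)

lemma mix_ex {m : ℕ} (σ : Fin (2 * m) → Bool) (j : Fin m) : mix (σ ∘ ex j) = mix σ := by
  ext i
  simp only [mix, mem_filter, mem_univ, true_and, Function.comp]
  by_cases hij : i = j
  · subst hij
    rw [ex_bL, ex_bR]
    exact ne_comm
  · have h1 : ex j (bL i) = bL i := by
      refine Equiv.swap_apply_of_ne_of_ne (fun h => hij ?_) (bL_ne_bR i j)
      have : 2 * i.val = 2 * j.val := congrArg Fin.val h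
      exact Fin.ext (by omega)
    have h2 : ex j (bR i) = bR i :=
      Equiv.swap_apply_of_ne_of_ne (bL_ne_bR j i).symm (bR_ne_bR hij)
    rw [h1, h2]

/-- The contribution to `Z_α` of the step sequences with opposite steps exactly in the blocks of
`S`, with the factors coming from the gaps inside the blocks removed. -/
def Hfun {m : ℕ} (α : PlanarPair m) (S : Finset (Fin m)) (x : Fin (2 * m) → ℝ) : ℝ :=
  ∑ σ ∈ univ.filter (fun σ => mix σ = S), coef α σ * Gfun σ x

lemma Hfun_vanish {m : ℕ} (α : PlanarPair m) (S : Finset (Fin m)) (j : Fin m) (hj : j ∈ S)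
    (hα : α.val (bL j) ≠ bR j) (x : Fin (2 * m) → ℝ) (hx : x (bL j) = x (bR j)) :
    Hfun α S x = 0 := by
  have h : Hfun α S x = -Hfun α S x := by
    nth_rewrite 1 [Hfun]
    unfold Hfun
    rw [← Finset.sum_neg_distrib]
    refine Finset.sum_bij' (fun σ _ => σ ∘ ex j) (fun σ _ => σ ∘ ex j) ?_ ?_ ?_ ?_ ?_
    · intro σ hσ
      simpa [mix_ex] using hσ
    · intro σ hσ
      simpa [mix_ex] using hσ
    · intro σ _
      funext i
      simp [ex_ex]
    · intro σ _
      funext i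
      simp [ex_ex]
    · intro σ hσ
      have hS : mix σ = S := by simpa using hσ
      have hm : σ (bL j) ≠ σ (bR j) := by
        have : j ∈ mix σ := hS ▸ hj
        simpa [mix] using this
      rw [Gfun_ex σ x j hx, coef_ex α j hα σ hm]
      ring
  linarith

lemma pureZ_div {m : ℕ} (α : PlanarPair m) (x : Fin (2 * m) → ℝ) (hx : x ∈ chamber (2 * m)) :
    pureZ α x / ∏ j, (x (bR j) - x (bL j)) ^ ((1 : ℝ) / 2) =
      ∑ S : Finset (Fin m), Hfun α S x / ∏ j ∈ S, (x (bR j) - x (bL j)) := by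
  have h1 : pureZ α x = ∑ σ, coef α σ * cblock (fun i => sg (σ i)) x := by
    rw [sum_coef]
    unfold pureZ
    simp_rw [pairSign_eq]
  have h2 : ∀ σ : Fin (2 * m) → Bool, cblock (fun i => sg (σ i)) x /
      ∏ j, (x (bR j) - x (bL j)) ^ ((1 : ℝ) / 2) =
      Gfun σ x / ∏ j ∈ mix σ, (x (bR j) - x (bL j)) := by
    intro σ
    rw [cblock_eq, mul_comm, mul_div_assoc, ← Finset.prod_div_distrib, div_eq_mul_inv (Gfun σ x),
      ← Finset.prod_inv_distrib]
    congr 1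
    unfold mix
    rw [Finset.prod_filter]
    refine Finset.prod_congr rfl fun j _ => ?_
    have hpos : 0 < x (bR j) - x (bL j) := sub_pos.2 (hx _ _ (bL_lt_bR j))
    rw [← Real.rpow_sub hpos]
    cases σ (bL j) <;> cases σ (bR j) <;> norm_num [sg, Real.rpow_neg_one]
  rw [h1, Finset.sum_div]
  simp_rw [mul_div_assoc, h2]
  rw [← Finset.sum_fiberwise univ (fun σ : Fin (2 * m) → Bool => mix σ)]
  refine Finset.sum_congr rfl fun S _ => ?_
  unfold Hfun
  rw [Finset.sum_div]
  refine Finset.sum_congr rfl fun σ hσ => ?_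
  have hS : mix σ = S := by simpa using hσ
  rw [hS, mul_div_assoc]

/-- The doubled configuration `y₀, y₀, y₁, y₁, …`. -/
def dbl {m : ℕ} (y : Fin m → ℝ) : Fin (2 * m) → ℝ :=
  fun i => y ⟨i.val / 2, by have := i.2; omega⟩

lemma dbl_bL {m : ℕ} (y : Fin m → ℝ) (j : Fin m) : dbl y (bL j) = y j :=
  congrArg y (Fin.ext (by simp only [bL]; omega))

lemma dbl_bR {m : ℕ} (y : Fin m → ℝ) (j : Fin m) : dbl y (bR j) = y j :=
  congrArg y (Fin.ext (by simp only [bR]; omega))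

lemma dbl_mem_sep {m : ℕ} (y : Fin m → ℝ) (hy : y ∈ chamber m) : dbl y ∈ sep m :=
  fun _ _ hpq => hy _ _ hpq

/-- The fusion limit of `Z_α` exists when `α` contains no link of a block. -/
lemma exists_fusion_limit {m : ℕ} (α : PlanarPair m) (hα : ∀ j, α.val (bL j) ≠ bR j)
    (y : Fin m → ℝ) (hy : y ∈ chamber m) :
    ∃ L, Tendsto (fun x => pureZ α x / ∏ j, (x (bR j) - x (bL j)) ^ ((1 : ℝ) / 2))
      (𝓝[chamber (2 * m)] dbl y) (𝓝 L) := by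
  obtain ⟨r, hr, hball⟩ := Metric.isOpen_iff.1 (isOpen_sep m) _ (dbl_mem_sep y hy)
  have h : ∀ S : Finset (Fin m), ∃ L, Tendsto
      (fun x => Hfun α S x / ∏ j ∈ S, (x (bR j) - x (bL j))) (𝓝[chamber (2 * m)] dbl y) (𝓝 L) := by
    intro S
    refine exists_tendsto_quotient (dbl y) (fun j => by rw [dbl_bL, dbl_bR]) r hr S _ ?_
      fun j hj x _ hx => Hfun_vanish α S j hj (hα j) x hx
    unfold Hfun
    exact ContDiffOn.sum fun σ _ => contDiffOn_const.mul ((contDiffOn_Gfun σ).mono hball)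
  choose L hL using h
  refine ⟨∑ S, L S, (tendsto_finsetSum univ fun S _ => hL S).congr' ?_⟩
  filter_upwards [self_mem_nhdsWithin] with x hx
  exact (pureZ_div α x hx).symm

/-! ### The total partition function -/

lemma prod_double {m : ℕ} (f : Fin (2 * m) → ℝ) : ∏ i, f i = ∏ j : Fin m, f (bL j) * f (bR j) := by
  have h : ∀ j : Fin m, f (bL j) * f (bR j) = ∏ b : Bool, f (if b then bL j else bR j) := by
    intro j
    simp
  simp_rw [h]
  rw [← Fintype.prod_prod_type (fun q : Fin m × Bool => f (if q.2 then bL q.1 else bR q.1))]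
  symm
  refine Finset.prod_bij (fun q _ => if q.2 then bL q.1 else bR q.1) (by simp) ?_ ?_ (by simp)
  · rintro ⟨i, b⟩ _ ⟨j, c⟩ _ h
    have h' := congrArg Fin.val h
    cases b <;> cases c <;> simp [bL, bR] at h' ⊢
    · exact Fin.ext h'
    · omega
    · omega
    · exact Fin.ext h'
  · intro i _
    refine ⟨(⟨i.val / 2, by have := i.2; omega⟩, decide (i.val % 2 = 0)), by simp, ?_⟩
    by_cases hi : i.val % 2 = 0
    · simp only [hi, decide_true, if_true]
      exact Fin.ext (by simp only [bL]; omega)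
    · simp only [hi, decide_false, Bool.false_eq_true, if_false]
      exact Fin.ext (by simp only [bR]; omega)

/-- When both steps of each block agree, the fused block has four equal factors for each pair of
blocks. -/
lemma Gfun_dbl {m : ℕ} (σ : Fin (2 * m) → Bool) (y : Fin m → ℝ) (hy : y ∈ chamber m)
    (hσ : ∀ j, σ (bR j) = σ (bL j)) :
    Gfun σ (dbl y) = ∏ p ∈ univ.filter (fun p : Fin m × Fin m => p.1 < p.2),
      (y p.2 - y p.1) ^ (2 * (sg (σ (bL p.1)) * sg (σ (bL p.2)))) := by
  unfold Gfun
  rw [Finset.prod_filter, Finset.prod_filter, Fintype.prod_prod_type, Fintype.prod_prod_type,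
    prod_double]
  refine Finset.prod_congr rfl fun i _ => ?_
  rw [prod_double, prod_double, ← Finset.prod_mul_distrib]
  refine Finset.prod_congr rfl fun k _ => ?_
  have e1 : (bL i).val / 2 = i.val := by simp only [bL]; omega
  have e2 : (bR i).val / 2 = i.val := by simp only [bR]; omega
  have e3 : (bL k).val / 2 = k.val := by simp only [bL]; omega
  have e4 : (bR k).val / 2 = k.val := by simp only [bR]; omega
  simp only [e1, e2, e3, e4, dbl_bL, dbl_bR, hσ]
  by_cases hik : i < k
  · have hik' : i.val < k.val := hik
    have hpos : 0 < y k - y i := sub_pos.2 (hy _ _ hik)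
    simp only [hik, hik', if_true]
    rw [← Real.rpow_add hpos, ← Real.rpow_add hpos]
    congr 1
    ring
  · have hik' : ¬ i.val < k.val := hik
    simp [hik, hik']

lemma neBot_chamber {m : ℕ} (y : Fin m → ℝ) (hy : y ∈ chamber m) :
    (𝓝[chamber (2 * m)] dbl y).NeBot := by
  rw [← mem_closure_iff_nhdsWithin_neBot]
  have hc : Tendsto (fun ε : ℝ => fun i : Fin (2 * m) => dbl y i + ε * i.val) (𝓝[>] 0)
      (𝓝 (dbl y)) := by
    have : Continuous (fun ε : ℝ => fun i : Fin (2 * m) => dbl y i + ε * i.val) := by fun_prop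
    have h := this.tendsto 0
    simp only [zero_mul, add_zero] at h
    exact h.mono_left nhdsWithin_le_nhds
  refine mem_closure_of_tendsto hc ?_
  filter_upwards [self_mem_nhdsWithin] with ε hε
  have hε' : 0 < ε := hε
  intro i j hij
  have h1 : dbl y i ≤ dbl y j := by
    have hij' : i.val < j.val := hij
    rcases Nat.lt_or_ge (i.val / 2) (j.val / 2) with h | h
    · exact (dbl_mem_sep y hy i j h).le
    · exact le_of_eq (congrArg y (Fin.ext (show i.val / 2 = j.val / 2 by omega)))
  have h2 : (i.val : ℝ) < j.val := by exact_mod_cast hij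
  have h3 := mul_lt_mul_of_pos_left h2 hε'
  show dbl y i + ε * i.val < dbl y j + ε * j.val
  linarith

/-- The total partition function of the metric graph GFF:
`Σ_β M_{ω,β} Ẑ_β = ∏_{i<j} (y_j - y_i)^{2(-1)^{j-i}}`. -/
theorem mgff_total_partition_function (N : ℕ) (hN : 1 ≤ N)
    (ω : PlanarPair (2 * N))
    (hω : ∀ j : Fin N,
      ω.val ⟨4 * j.val, by have := j.2; omega⟩ = ⟨4 * j.val + 3, by have := j.2; omega⟩ ∧
      ω.val ⟨4 * j.val + 1, by have := j.2; omega⟩ = ⟨4 * j.val + 2, by have := j.2; omega⟩)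
    (y : Fin (2 * N) → ℝ) (hy : y ∈ chamber (2 * N)) :
    ∑ β ∈ univ.filter (fun β : PlanarPair (2 * N) => noFuseLink β),
        Mmat (2 * N) ω β * fusedZ β y =
      ∏ p ∈ univ.filter (fun p : Fin (2 * N) × Fin (2 * N) => p.1 < p.2),
        (y p.2 - y p.1) ^ (2 * (-1 : ℝ) ^ (p.2.val - p.1.val)) := by
  have hop : ∀ j : Fin (2 * N), opn ω (bL j) = decide (j.val % 2 = 0) ∧
      opn ω (bR j) = decide (j.val % 2 = 0) := by
    intro j
    have hj2 := j.2
    obtain ⟨h1, h2⟩ := hω ⟨j.val / 2, by omega⟩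
    have h3 := congrArg ω.val h1
    have h4 := congrArg ω.val h2
    rw [ω.2.1] at h3 h4
    rcases Nat.mod_two_eq_zero_or_one j.val with hj | hj
    · have e1 : bL j = ⟨4 * (j.val / 2), by omega⟩ := Fin.ext (by simp only [bL]; omega)
      have e2 : bR j = ⟨4 * (j.val / 2) + 1, by omega⟩ := Fin.ext (by simp only [bR]; omega)
      unfold opn
      rw [e1, e2, h1, h2]
      simp [hj]
    · have e1 : bL j = ⟨4 * (j.val / 2) + 2, by omega⟩ := Fin.ext (by simp only [bL]; omega)
      have e2 : bR j = ⟨4 * (j.val / 2) + 3, by omega⟩ := Fin.ext (by simp only [bR]; omega)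
      unfold opn
      rw [e1, e2, ← h3, ← h4]
      simp [hj]
  -- Both points of each block carry the same step of `ω`, so `ω ⟵ β` excludes block links.
  have hzero : ∀ β : PlanarPair (2 * N), ¬ noFuseLink β → Mmat (2 * N) ω β = 0 := by
    intro β hβ
    unfold noFuseLink at hβ
    push Not at hβ
    obtain ⟨j, hj⟩ := hβ
    refine if_neg fun hk => ?_
    have h1 := (kwRel_iff _ _).1 hk (bL j)
    have hj' : β.val (bL j) = bR j := hj
    rw [hj', (hop j).1, (hop j).2] at h1
    simp at h1
  have hne := neBot_chamber y hy
  have hlim : ∀ β : PlanarPair (2 * N), noFuseLink β →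
      Tendsto (fun x => pureZ β x / fuseDenom x) (𝓝[chamber (2 * (2 * N))] dbl y)
        (𝓝 (fusedZ β y)) := by
    intro β hβ
    obtain ⟨L, hL⟩ := exists_fusion_limit β hβ y hy
    have hL' : Tendsto (fun x => pureZ β x / fuseDenom x) (𝓝[chamber (2 * (2 * N))] dbl y)
        (𝓝 L) := hL
    have : fusedZ β y = L := hL'.limUnder_eq
    rw [this]
    exact hL'
  have hsum : Tendsto (fun x => ∑ β ∈ univ.filter (fun β : PlanarPair (2 * N) => noFuseLink β),
      Mmat (2 * N) ω β * (pureZ β x / fuseDenom x)) (𝓝[chamber (2 * (2 * N))] dbl y)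
      (𝓝 (∑ β ∈ univ.filter (fun β : PlanarPair (2 * N) => noFuseLink β),
        Mmat (2 * N) ω β * fusedZ β y)) :=
    tendsto_finsetSum _ fun β hβ => (hlim β (by simpa using hβ)).const_mul _
  have hG : Tendsto (Gfun (opn ω)) (𝓝[chamber (2 * (2 * N))] dbl y)
      (𝓝 (Gfun (opn ω) (dbl y))) :=
    ((contDiffOn_Gfun (opn ω)).continuousOn.continuousAt
      ((isOpen_sep _).mem_nhds (dbl_mem_sep y hy))).tendsto.mono_left nhdsWithin_le_nhds
  have heq : (fun x => ∑ β ∈ univ.filter (fun β : PlanarPair (2 * N) => noFuseLink β),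
      Mmat (2 * N) ω β * (pureZ β x / fuseDenom x)) =ᶠ[𝓝[chamber (2 * (2 * N))] dbl y]
      Gfun (opn ω) := by
    filter_upwards [self_mem_nhdsWithin] with x hx
    rw [Finset.sum_filter_of_ne fun β _ h => by
      by_contra hβ
      exact h (by rw [hzero β hβ, zero_mul])]
    simp_rw [← mul_div_assoc]
    rw [← Finset.sum_div, sum_Mmat_pureZ, pairSign_eq, cblock_eq, mul_comm, mul_div_assoc]
    have hden : ∏ j : Fin (2 * N), (x (bR j) - x (bL j)) ^
        (sg (opn ω (bL j)) * sg (opn ω (bR j)) / 2) = fuseDenom x := by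
      refine Finset.prod_congr rfl fun j _ => ?_
      have : sg (opn ω (bL j)) * sg (opn ω (bR j)) = 1 := by
        rw [(hop j).1, (hop j).2]
        cases decide (j.val % 2 = 0) <;> simp [sg]
      rw [this]
      rfl
    have hpos : 0 < fuseDenom x := by
      refine Finset.prod_pos fun j _ => Real.rpow_pos_of_pos (sub_pos.2 ?_) _
      exact hx _ _ (bL_lt_bR j)
    rw [hden, div_self hpos.ne', mul_one]
  rw [tendsto_nhds_unique (hsum.congr' heq) hG,
    Gfun_dbl _ y hy fun j => by rw [(hop j).1, (hop j).2]]
  refine Finset.prod_congr rfl fun p hp => ?_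
  have hlt : p.1.val < p.2.val := by simpa using hp
  congr 2
  rw [(hop p.1).1, (hop p.2).1]
  -- `(-1)^(j-i)` is the product of the signs `(-1)^i` and `(-1)^j` of the two blocks.
  rcases Nat.mod_two_eq_zero_or_one p.1.val with h1 | h1 <;>
    rcases Nat.mod_two_eq_zero_or_one p.2.val with h2 | h2
  · rw [Even.neg_one_pow (Nat.even_iff.2 (by omega))]
    simp [sg, h1, h2]
  · rw [Odd.neg_one_pow (Nat.odd_iff.2 (by omega))]
    simp [sg, h1, h2]
  · rw [Odd.neg_one_pow (Nat.odd_iff.2 (by omega))]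
    simp [sg, h1, h2]
  · rw [Even.neg_one_pow (Nat.even_iff.2 (by omega))]
    simp [sg, h1, h2]
end
end

section
/- Let N ≥ 1, let α ∈ Pair_N and let j ∈ {1,…,2N−1} with {j,j+1} ∉ α. Fix x_1<⋯<x_{j−1}<ξ<x_{j+2}<⋯<x_{2N}. Then, as (x̃_1,…,x̃_{2N}) ranges over the chamber X_{2N} with x̃_j → ξ, x̃_{j+1} → ξ and x̃_i → x_i for every i ∉ {j,j+1}, the quotient Z_α(x̃_1,…,x̃_{2N}) / (x̃_{j+1}−x̃_j)^{1/2} converges to Z_{α/⨿_j}(x_1,…,x_{j−1},ξ,x_{j+2},…,x_{2N}). -/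
/-!
Write `h = x_{j+1} - x_j`. A block whose path has a slope at `j` carries the factor `h^{1/2}`, so it
has a limit after division by `h^{1/2}` (`slope_limit`). Blocks with a local extremum at `j` carry
`h^{-1/2}` and diverge individually, but the difference of two blocks with a minimum and a maximum
at `j` and equal signs elsewhere is `2 P h^{-1/2} sinh S` with `S / h` convergent, and this yields
`V_{σ/∨_j}` (`flip_limit`).

It remains to see that in `Z_α` with `{j, j+1} ∉ α` the extremal blocks occur only through such
differences (`inv_row_relation`). A local maximum at `j` means that `{j, j+1}` is a link. Let `L` be
the set of partitions containing this link. For `γ ∈ L` the relation `β ⟵ γ` forces `β` to have an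
extremum at `j` and does not distinguish a minimum from its flip to a maximum. Hence the columns of
`M` indexed by `L` equal `W K`, where `K` is the `L × L` block of `M` and the column `W_γ` is the
indicator of `γ` and of all partitions with a minimum at `j` flipping to `γ`. As `M` is injective, so
is `K`, which is therefore invertible; thus `M⁻¹ W` is the inclusion of `L` composed with `K⁻¹`,
whose row at `α ∉ L` vanishes. This is the required cancellation, and it needs neither the
injectivity of flipping nor an explicit formula for `M⁻¹`.
-/

open Filter Finset
open scoped BigOperators Classical Topology

noncomputable section

/-! ### Isolating the coordinates `j`, `j + 1` in a conformal block -/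

/-- The product of a symmetric function over the ordered pairs joining `c` to a point of `I`. -/
lemma prod_pairs_through {n : ℕ} (I : Finset (Fin n)) (c : Fin n) (hc : c ∉ I)
    (g : Fin n → Fin n → ℝ) (hg : ∀ i k, g i k = g k i) :
    ∏ p ∈ univ.filter (fun p : Fin n × Fin n =>
        p.1 < p.2 ∧ ((p.1 = c ∧ p.2 ∈ I) ∨ (p.2 = c ∧ p.1 ∈ I))), g p.1 p.2
      = ∏ i ∈ I, g i c := by
  refine Finset.prod_bij' (fun p _ => if p.1 = c then p.2 else p.1)
    (fun i _ => if i < c then (i, c) else (c, i)) ?_ ?_ ?_ ?_ ?_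
  · rintro ⟨p, q⟩ h
    simp only [mem_filter, mem_univ, true_and] at h
    grind
  · intro i hi
    have : i ≠ c := fun h => hc (h ▸ hi)
    simp only [mem_filter, mem_univ, true_and]
    rcases lt_or_gt_of_ne this with h | h
    · simp [h, hi]
    · simp [h, hi, not_lt.2 h.le]
  · rintro ⟨p, q⟩ h
    simp only [mem_filter, mem_univ, true_and] at h
    rcases h with ⟨h, ⟨rfl, h2⟩ | ⟨rfl, h2⟩⟩
    · simp [not_lt.2 h.le]
    · simp [h.ne, h]
  · intro i hi
    have : i ≠ c := fun h => hc (h ▸ hi)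
    rcases lt_or_gt_of_ne this with h | h
    · simp [h, this]
    · simp [not_lt.2 h.le]
  · rintro ⟨p, q⟩ h
    simp only [mem_filter, mem_univ, true_and] at h
    rcases h with ⟨h, ⟨rfl, h2⟩ | ⟨rfl, h2⟩⟩
    · simp [hg]
    · simp [h.ne]

/-- The factors of `cblock σ x` that do not involve the coordinates `j`, `j + 1`. -/
def restProd {n : ℕ} (σ : Fin n → ℝ) (j : ℕ) (x : Fin n → ℝ) : ℝ :=
  ∏ p ∈ univ.filter (fun p : Fin n × Fin n =>
      p.1 < p.2 ∧ p.1.val ≠ j ∧ p.1.val ≠ j + 1 ∧ p.2.val ≠ j ∧ p.2.val ≠ j + 1),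
    (x p.2 - x p.1) ^ (σ p.1 * σ p.2 / 2)

/-- The indices other than `j`, `j + 1`. -/
def others (n j : ℕ) : Finset (Fin n) := univ.filter (fun i : Fin n => i.val ≠ j ∧ i.val ≠ j + 1)

/-- The factors of `cblock σ x` that involve exactly one of the coordinates `j`, `j + 1`. -/
def crossProd {n : ℕ} (σ : Fin n → ℝ) (j : ℕ) (hj : j + 1 < n) (x : Fin n → ℝ) : ℝ :=
  ∏ i ∈ others n j, (|x i - x ⟨j, by omega⟩| ^ (σ i * σ ⟨j, by omega⟩ / 2) *
    |x i - x ⟨j + 1, hj⟩| ^ (σ i * σ ⟨j + 1, hj⟩ / 2))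

lemma cblock_split {n : ℕ} (σ : Fin n → ℝ) (j : ℕ) (hj : j + 1 < n) (x : Fin n → ℝ)
    (hx : x ∈ chamber n) :
    cblock σ x = restProd σ j x * crossProd σ j hj x *
      (x ⟨j + 1, hj⟩ - x ⟨j, by omega⟩) ^ (σ ⟨j, by omega⟩ * σ ⟨j + 1, hj⟩ / 2) := by
  set a : Fin n := ⟨j, by omega⟩ with ha
  set b : Fin n := ⟨j + 1, hj⟩ with hb
  have hab : a < b := by simp [ha, hb, Fin.lt_def]
  let g : Fin n → Fin n → ℝ := fun i k => |x i - x k| ^ (σ i * σ k / 2)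
  have hg : ∀ i k, g i k = g k i := by
    intro i k
    simp only [g, abs_sub_comm (x i), mul_comm (σ i)]
  have hgx : ∀ i k, i < k → (x k - x i) ^ (σ i * σ k / 2) = g i k := by
    intro i k hik
    simp only [g]
    rw [abs_sub_comm, abs_of_pos (sub_pos.2 (hx i k hik))]
  have hval : ∀ i : Fin n, i.val = j ↔ i = a := fun i => by simp [ha, Fin.ext_iff]
  have hval' : ∀ i : Fin n, i.val = j + 1 ↔ i = b := fun i => by simp [hb, Fin.ext_iff]
  have hI : ∀ i, i ∈ others n j ↔ i ≠ a ∧ i ≠ b := by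
    intro i
    simp [others, hval, hval']
  have h1 := prod_pairs_through (others n j) a (by simp [hI]) g hg
  have h2 := prod_pairs_through (others n j) b (by simp [hI]) g hg
  have h3 : crossProd σ j hj x = (∏ i ∈ others n j, g i a) * ∏ i ∈ others n j, g i b := by
    rw [← Finset.prod_mul_distrib]; rfl
  have h4 : restProd σ j x = ∏ p ∈ univ.filter (fun p : Fin n × Fin n =>
      p.1 < p.2 ∧ p.1 ∈ others n j ∧ p.2 ∈ others n j), g p.1 p.2 := by
    unfold restProd
    refine Finset.prod_congr ?_ ?_
    · ext p
      simp only [mem_filter, mem_univ, true_and, hI, ne_eq, hval, hval']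
      tauto
    · intro p hp
      simp only [mem_filter] at hp
      exact hgx _ _ hp.2.1
  have h5 : cblock σ x = ∏ p ∈ univ.filter (fun p : Fin n × Fin n => p.1 < p.2), g p.1 p.2 := by
    refine Finset.prod_congr rfl ?_
    intro p hp
    simp only [mem_filter] at hp
    exact hgx _ _ hp.2
  have h6 : g a b = ∏ p ∈ univ.filter (fun p : Fin n × Fin n => p = (a, b)), g p.1 p.2 := by
    rw [Finset.filter_eq']; simp
  rw [hgx a b hab, h3, ← h1, ← h2, h4, h5, h6]
  simp only [Finset.prod_filter]
  simp only [← Finset.prod_mul_distrib]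
  refine Finset.prod_congr rfl ?_
  rintro ⟨p, q⟩ -
  simp only [hI, Prod.mk.injEq]
  have hab' := hab.ne
  by_cases hpq : p < q
  · have hpq' := hpq.ne
    by_cases e1 : p = a
    · subst e1
      by_cases e2 : q = b
      · subst e2; simp [hab, hab', hab'.symm]
      · simp [hpq, hpq'.symm, e2, hab']
    · by_cases e1' : p = b
      · subst e1'
        have : q ≠ a := by rintro rfl; exact absurd hpq hab.le.not_gt
        simp [hpq, e1, hpq'.symm, this]
      · by_cases e2 : q = a
        · subst e2; simp [hpq, e1, e1', hab']
        · by_cases e2' : q = b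
          · subst e2'; simp [hpq, e1, e1', e2]
          · simp [hpq, e1, e1', e2, e2']
  · have : ¬ (p = a ∧ q = b) := by rintro ⟨rfl, rfl⟩; exact hpq hab
    simp [hpq, this]

/-! ### Limits of blocks as `x_j` and `x_{j+1}` merge -/

section Limits

variable {n : ℕ} {j : ℕ} {x₀ : Fin n → ℝ}

lemma coord_tendsto (i : Fin n) :
    Tendsto (fun x : Fin n → ℝ => x i) (𝓝[chamber n] x₀) (𝓝 (x₀ i)) :=
  ((continuous_apply i).tendsto x₀).mono_left nhdsWithin_le_nhds

lemma others_ne (hj : j + 1 < n) (hx₀ : x₀ ∈ fusedChamber n j) {i : Fin n}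
    (hi : i ∈ others n j) : x₀ i - x₀ ⟨j, by omega⟩ ≠ 0 := by
  simp only [others, mem_filter, mem_univ, true_and] at hi
  rcases lt_or_gt_of_ne hi.1 with h | h
  · exact (sub_neg.2 (hx₀ i ⟨j, by omega⟩ h hi.2 (by simp))).ne
  · exact (sub_pos.2 (hx₀ ⟨j, by omega⟩ i h (by simp) hi.2)).ne'

lemma restProd_tendsto (σ : Fin n → ℝ) (hx₀ : x₀ ∈ fusedChamber n j) :
    Tendsto (restProd σ j) (𝓝[chamber n] x₀) (𝓝 (restProd σ j x₀)) := by
  unfold restProd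
  refine tendsto_finsetProd _ fun p hp => ?_
  simp only [mem_filter, mem_univ, true_and] at hp
  exact ((coord_tendsto _).sub (coord_tendsto _)).rpow_const
    (Or.inl (sub_pos.2 (hx₀ p.1 p.2 hp.1 hp.2.2.1 hp.2.2.2.2)).ne')

/-- For a slope at `j`, both coordinates `j`, `j + 1` interact with the other points with the same
sign, and the factor `(x_{j+1} - x_j)^{1/2}` of the block cancels the normalization. -/
lemma slope_limit (σ : Fin n → ℝ) (hj : j + 1 < n)
    (hx₀ : x₀ ∈ fusedChamber n j) (hfuse : x₀ ⟨j + 1, hj⟩ = x₀ ⟨j, by omega⟩)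
    (hs : σ ⟨j, by omega⟩ = σ ⟨j + 1, hj⟩) (h1 : σ ⟨j, by omega⟩ = 1 ∨ σ ⟨j, by omega⟩ = -1) :
    Tendsto (fun x => cblock σ x / (x ⟨j + 1, hj⟩ - x ⟨j, by omega⟩) ^ ((1 : ℝ) / 2))
      (𝓝[chamber n] x₀) (𝓝 (Ufuse σ j hj x₀)) := by
  have hQ : Tendsto (crossProd σ j hj) (𝓝[chamber n] x₀) (𝓝 (crossProd σ j hj x₀)) := by
    unfold crossProd
    refine tendsto_finsetProd _ fun i hi => ?_
    have hne := others_ne hj hx₀ hi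
    exact (((coord_tendsto _).sub (coord_tendsto _)).abs.rpow_const
      (Or.inl (abs_ne_zero.2 hne))).mul
      (((coord_tendsto _).sub (coord_tendsto _)).abs.rpow_const
      (Or.inl (abs_ne_zero.2 (by rw [hfuse]; exact hne))))
  have hU : Ufuse σ j hj x₀ = restProd σ j x₀ * crossProd σ j hj x₀ := by
    unfold Ufuse restProd crossProd
    congr 1
    refine Finset.prod_congr rfl fun i hi => ?_
    have hne := others_ne hj hx₀ hi
    rw [hfuse, ← hs, ← Real.rpow_add (abs_pos.2 hne), add_halves]
  rw [hU]
  refine ((restProd_tendsto σ hx₀).mul hQ).congr' ?_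
  filter_upwards [self_mem_nhdsWithin] with x hx
  have hpos : 0 < x ⟨j + 1, hj⟩ - x ⟨j, by omega⟩ := sub_pos.2 (hx _ _ (by simp [Fin.lt_def]))
  have hsq : σ ⟨j, by omega⟩ * σ ⟨j + 1, hj⟩ = 1 := by
    rw [← hs]; rcases h1 with h | h <;> rw [h] <;> norm_num
  rw [cblock_split σ j hj x hx, hsq, mul_div_cancel_right₀ _ (Real.rpow_pos_of_pos hpos _).ne']

/-- The divided difference of `log` at two points merging at `c ≠ 0`; the sign comes from the
denominator `z - y`. -/
lemma log_quot_tendsto {ι : Type*} {l : Filter ι} {y z : ι → ℝ} {c : ℝ} (hc : c ≠ 0)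
    (hy : Tendsto y l (𝓝 c)) (hz : Tendsto z l (𝓝 c)) (hyz : ∀ᶠ t in l, z t - y t ≠ 0) :
    Tendsto (fun t => (Real.log (y t) - Real.log (z t)) / (z t - y t)) l (𝓝 (-(1 / c))) := by
  have hd : ContinuousAt (dslope Real.log 1) 1 :=
    continuousAt_dslope_same.2 (Real.differentiableAt_log one_ne_zero)
  have hr : Tendsto (fun t => y t / z t) l (𝓝 1) := by
    have := hy.div hz hc
    rwa [div_self hc] at this
  have h1 := hd.tendsto.comp hr
  rw [dslope_same, Real.deriv_log, inv_one] at h1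
  have h2 := ((hz.inv₀ hc).mul h1).neg
  rw [mul_one, ← one_div] at h2
  refine h2.congr' ?_
  filter_upwards [hyz, hy.eventually_ne hc, hz.eventually_ne hc] with t h hy0 hz0
  have hne : y t / z t ≠ 1 := by
    rw [Ne, div_eq_one_iff_eq hz0]
    exact fun e => h (by rw [e, sub_self])
  have h' : y t - z t ≠ 0 := fun e => h (by linarith)
  simp only [Function.comp]
  rw [dslope_of_ne _ hne, slope_def_field, Real.log_one, Real.log_div hy0 hz0]
  rw [← neg_sub (y t) (z t)]
  field_simp
  ring

/-- The logarithm of `crossProd σ j hj x` when `σ j = -1` and `σ (j + 1) = 1`. Absolute values are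
omitted since `Real.log` is even. -/
def logIncr (σ : Fin n → ℝ) (j : ℕ) (hj : j + 1 < n) (x : Fin n → ℝ) : ℝ :=
  ∑ i ∈ others n j,
    σ i / 2 * (Real.log (x i - x ⟨j + 1, hj⟩) - Real.log (x i - x ⟨j, by omega⟩))

/-- The difference of the blocks with a local minimum and a local maximum at `j`, all other signs
being equal, is `2 P h^{-1/2} sinh S` with `h = x_{j+1} - x_j`, `P = restProd` and `S = logIncr`.
As `S / h` converges, so does the difference divided by `h^{1/2}`. -/
lemma flip_limit (σ σ' : Fin n → ℝ) (hj : j + 1 < n)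
    (hx₀ : x₀ ∈ fusedChamber n j) (hfuse : x₀ ⟨j + 1, hj⟩ = x₀ ⟨j, by omega⟩)
    (ha : σ ⟨j, by omega⟩ = -1) (hb : σ ⟨j + 1, hj⟩ = 1)
    (ha' : σ' ⟨j, by omega⟩ = 1) (hb' : σ' ⟨j + 1, hj⟩ = -1)
    (hσ : ∀ i ∈ others n j, σ' i = σ i) :
    Tendsto (fun x => (cblock σ x - cblock σ' x) /
        (x ⟨j + 1, hj⟩ - x ⟨j, by omega⟩) ^ ((1 : ℝ) / 2))
      (𝓝[chamber n] x₀) (𝓝 (Vfuse σ j hj x₀)) := by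
  set a : Fin n := ⟨j, by omega⟩ with hadef
  set b : Fin n := ⟨j + 1, hj⟩ with hbdef
  have hab : a < b := by simp [hadef, hbdef, Fin.lt_def]
  have hpos : ∀ᶠ x in 𝓝[chamber n] x₀, 0 < x b - x a := by
    filter_upwards [self_mem_nhdsWithin] with x hx using sub_pos.2 (hx _ _ hab)
  have hne : ∀ᶠ x in 𝓝[chamber n] x₀, ∀ i ∈ others n j, x i - x a ≠ 0 ∧ x i - x b ≠ 0 := by
    filter_upwards [self_mem_nhdsWithin] with x hx i hi
    have hinj : Function.Injective x := StrictMono.injective (fun i k h => hx i k h)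
    simp only [others, mem_filter, mem_univ, true_and] at hi
    refine ⟨sub_ne_zero.2 (hinj.ne ?_), sub_ne_zero.2 (hinj.ne ?_)⟩
    · rintro rfl; exact hi.1 rfl
    · rintro rfl; exact hi.2 rfl
  have hrest : restProd σ' j = restProd σ j := by
    funext x
    unfold restProd
    refine Finset.prod_congr rfl fun p hp => ?_
    simp only [mem_filter, mem_univ, true_and] at hp
    rw [hσ p.1 (by simp [others, hp]), hσ p.2 (by simp [others, hp])]
  have hS : Tendsto (fun x => logIncr σ j hj x / (x b - x a)) (𝓝[chamber n] x₀)
      (𝓝 (∑ i ∈ others n j, σ i / 2 * -(1 / (x₀ i - x₀ a)))) := by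
    simp only [logIncr, Finset.sum_div, mul_div_assoc]
    refine tendsto_finsetSum _ fun i hi => Tendsto.const_mul _ ?_
    have := log_quot_tendsto (l := 𝓝[chamber n] x₀) (y := fun x => x i - x b)
      (z := fun x => x i - x a) (others_ne hj hx₀ hi)
      (by
        have := (coord_tendsto (x₀ := x₀) i).sub (coord_tendsto (x₀ := x₀) b)
        rwa [hfuse] at this)
      ((coord_tendsto i).sub (coord_tendsto a))
      (by filter_upwards [hpos] with x hx; intro h; linarith)
    simpa using this
  have hh : Tendsto (fun x : Fin n → ℝ => x b - x a) (𝓝[chamber n] x₀) (𝓝 0) := by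
    have := (coord_tendsto (x₀ := x₀) b).sub (coord_tendsto (x₀ := x₀) a)
    rwa [hfuse, sub_self] at this
  have hS0 : Tendsto (logIncr σ j hj) (𝓝[chamber n] x₀) (𝓝 0) := by
    have := hS.mul hh
    rw [mul_zero] at this
    refine this.congr' ?_
    filter_upwards [hpos] with x hx
    rw [div_mul_cancel₀ _ hx.ne']
  have hsinh : Tendsto (fun x => dslope Real.sinh 0 (logIncr σ j hj x)) (𝓝[chamber n] x₀)
      (𝓝 1) := by
    have hd : ContinuousAt (dslope Real.sinh 0) 0 :=
      continuousAt_dslope_same.2 Real.differentiable_sinh.differentiableAt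
    have := hd.tendsto.comp hS0
    rwa [dslope_same, Real.deriv_sinh, Real.cosh_zero] at this
  have hsinh_eq : ∀ s : ℝ, s * dslope Real.sinh 0 s = Real.sinh s := by
    intro s
    have := sub_smul_dslope Real.sinh 0 s
    simpa using this
  have hQ : ∀ᶠ x in 𝓝[chamber n] x₀, crossProd σ j hj x = Real.exp (logIncr σ j hj x) ∧
      crossProd σ' j hj x = Real.exp (-logIncr σ j hj x) := by
    filter_upwards [hne] with x hx
    simp only [crossProd, logIncr, ← Finset.sum_neg_distrib, Real.exp_sum]
    constructor <;> refine Finset.prod_congr rfl fun i hi => ?_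
    · rw [Real.rpow_def_of_pos (abs_pos.2 (hx i hi).1), Real.rpow_def_of_pos
        (abs_pos.2 (hx i hi).2), ← Real.exp_add, Real.log_abs, Real.log_abs, ha, hb]
      congr 1; ring
    · rw [Real.rpow_def_of_pos (abs_pos.2 (hx i hi).1), Real.rpow_def_of_pos
        (abs_pos.2 (hx i hi).2), ← Real.exp_add, Real.log_abs, Real.log_abs, ha', hb', hσ i hi]
      congr 1; ring
  have hV : Vfuse σ j hj x₀ = restProd σ j x₀ *
      (2 * ((∑ i ∈ others n j, σ i / 2 * -(1 / (x₀ i - x₀ a))) * 1)) := by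
    unfold Vfuse restProd
    congr 1
    rw [mul_one, Finset.mul_sum]
    refine Finset.sum_congr rfl fun i _ => ?_
    rw [← hadef, ha]; ring
  rw [hV]
  refine ((restProd_tendsto σ hx₀).mul ((hS.mul hsinh).const_mul 2)).congr' ?_
  filter_upwards [hpos, hQ, self_mem_nhdsWithin] with x hx hq hxc
  rw [cblock_split σ j hj x hxc, cblock_split σ' j hj x hxc, hrest, hq.1, hq.2]
  rw [← hadef, ← hbdef, ha, hb, ha', hb', div_mul_eq_mul_div, hsinh_eq, Real.sinh_eq]
  have e1 : (x b - x a) ^ ((-1 : ℝ) * 1 / 2) = ((x b - x a) ^ ((1 : ℝ) / 2))⁻¹ := by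
    rw [← Real.rpow_neg hx.le]; norm_num
  have e2 : (x b - x a) ^ ((1 : ℝ) * -1 / 2) = ((x b - x a) ^ ((1 : ℝ) / 2))⁻¹ := by
    rw [← Real.rpow_neg hx.le]; norm_num
  have e3 : (x b - x a) ^ ((1 : ℝ) / 2) * (x b - x a) ^ ((1 : ℝ) / 2) = x b - x a := by
    rw [← Real.rpow_add hx, add_halves, Real.rpow_one]
  have e4 := (Real.rpow_pos_of_pos hx ((1 : ℝ) / 2)).ne'
  rw [e1, e2]
  generalize (x b - x a) ^ ((1 : ℝ) / 2) = w at *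
  rw [← e3]
  field_simp

end Limits

/-! ### Flipping a local minimum, and the rows of `M⁻¹` -/

section Combinatorics

variable {N : ℕ}

/-- The surgery turning a local minimum at `j` into a local maximum: the links of `j` and `j + 1`
are replaced by the link `{j, j + 1}` and the link between the two former partners. Here `a`, `b`
stand for `j`, `j + 1`, and `f` is the involution encoding the partition. -/
def surgFun (f : Fin (2 * N) → Fin (2 * N)) (a b : Fin (2 * N)) (i : Fin (2 * N)) : Fin (2 * N) :=
  if i = a then b else if i = b then a else if i = f a then f b else if i = f b then f a else f i

lemma surgFun_planar (β : PlanarPair N) (a b : Fin (2 * N)) (hab : b.val = a.val + 1)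
    (ha : β.val a < a) (hb : b < β.val b) :
    (∀ i, surgFun β.val a b (surgFun β.val a b i) = i) ∧ (∀ i, surgFun β.val a b i ≠ i) ∧
      ∀ i k, i < k → k < surgFun β.val a b i →
        i < surgFun β.val a b k ∧ surgFun β.val a b k < surgFun β.val a b i := by
  obtain ⟨f, h1, h2, h3⟩ := β
  simp only at ha hb ⊢
  have hinj : ∀ i k, f i = k → i = f k := by rintro i k rfl; exact (h1 i).symm
  have hlt : a < b := by simp [Fin.lt_def, hab]
  have hbet : ∀ i : Fin (2 * N), ¬ (a < i ∧ i < b) := by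
    intro i h; simp only [Fin.lt_def] at h; omega
  refine ⟨?_, ?_, ?_⟩
  · intro i
    unfold surgFun
    have := h1 i
    grind
  · intro i
    unfold surgFun
    have := h2 i
    grind
  · intro i k hik hk
    have q1 := h3 i k hik
    have q2 := h3 i a
    have q3 := h3 i b
    have q4 := h3 (f a) k
    have q5 := h3 b k
    rw [h1 a] at q4
    have hsw : ∀ u c : Fin (2 * N), u = f c ↔ f u = c :=
      fun u c => ⟨fun h => by rw [h, h1], fun h => by rw [← h, h1]⟩
    have e1 := hsw i a
    have e2 := hsw i b
    have e3 := hsw k a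
    have e4 := hsw k b
    have e5 : i = a → f i = f a := fun h => by rw [h]
    have e6 : i = b → f i = f b := fun h => by rw [h]
    have e7 : k = a → f k = f a := fun h => by rw [h]
    have e8 : k = b → f k = f b := fun h => by rw [h]
    have hne := h2 i
    unfold surgFun at *
    clear h1 h2 h3 hsw hinj hbet
    split_ifs at hk ⊢ <;> simp only [Fin.lt_def, Fin.ext_iff] at * <;> omega

/-- `surgFun` as an operation on planar pair partitions with a local minimum at `a`. -/
def surg (β : PlanarPair N) (a b : Fin (2 * N)) (hab : b.val = a.val + 1)
    (ha : β.val a < a) (hb : b < β.val b) : PlanarPair N :=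
  ⟨surgFun β.val a b, surgFun_planar β a b hab ha hb⟩

/-- Flipping a local minimum at `a` does not change the signs away from `a`, `b`. -/
lemma surg_up (β : PlanarPair N) (a b : Fin (2 * N)) (hab : b.val = a.val + 1)
    (ha : β.val a < a) (hb : b < β.val b) (i : Fin (2 * N)) (hia : i ≠ a) (hib : i ≠ b) :
    i < (surg β a b hab ha hb).val i ↔ i < β.val i := by
  obtain ⟨f, h1, h2, h3⟩ := β
  simp only [surg, surgFun] at ha hb ⊢
  have hlt : a < b := by simp [Fin.lt_def, hab]
  have r3 := h1 a
  have r4 := h1 b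
  grind

/-- By planarity, an opener immediately followed by a closer is linked to it. -/
lemma link_of_max (β : PlanarPair N) (a b : Fin (2 * N)) (hab : b.val = a.val + 1)
    (ha : a < β.val a) (hb : β.val b < b) : β.val a = b := by
  obtain ⟨f, h1, h2, h3⟩ := β
  simp only at ha hb ⊢
  by_contra hne
  have hlt : a < b := by simp [Fin.lt_def, hab]
  have : b < f a := by
    simp only [Fin.lt_def, Fin.ext_iff] at *; omega
  have := h3 a b hlt this
  simp only [Fin.lt_def, Fin.ext_iff] at *; omega

lemma down_iff (β : PlanarPair N) (i : Fin (2 * N)) : ¬ i < β.val i ↔ β.val i < i :=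
  ⟨fun h => lt_of_le_of_ne (not_lt.1 h) (β.2.2.1 i), fun h => h.not_gt⟩

/-- A local minimum at `a`, in terms of the links. -/
def HasMinAt (β : PlanarPair N) (a b : Fin (2 * N)) : Prop := β.val a < a ∧ b < β.val b

/-- `surg` extended by the identity to partitions without a local minimum. -/
def surg' (a b : Fin (2 * N)) (hab : b.val = a.val + 1) (β : PlanarPair N) : PlanarPair N :=
  if h : HasMinAt β a b then surg β a b hab h.1 h.2 else β

/-- When `γ` contains the link `{a, b}`, the relation `β ⟵ γ` is insensitive to exchanging
the signs of `β` at `a` and `b`. -/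
lemma kwRel_surg (a b : Fin (2 * N)) (hab : b.val = a.val + 1) (β γ : PlanarPair N)
    (hm : HasMinAt β a b) (hγ : γ.val a = b) :
    kwRel (surg' a b hab β) γ ↔ kwRel β γ := by
  have hγ' : γ.val b = a := by rw [← hγ]; exact γ.2.1 a
  have hlt : a < b := by simp [Fin.lt_def, hab]
  have hs : surg' a b hab β = surg β a b hab hm.1 hm.2 := by simp [surg', hm]
  have hsa : (surg' a b hab β).val a = b := by rw [hs]; simp [surg, surgFun]
  have hsb : (surg' a b hab β).val b = a := by rw [hs]; simp [surg, surgFun, hlt.ne']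
  have key : ∀ i, i ≠ a → i ≠ b → (i < (surg' a b hab β).val i ↔ i < β.val i) := by
    rw [hs]; exact surg_up β a b hab hm.1 hm.2
  unfold kwRel
  refine forall_congr' fun i => ?_
  by_cases hia : i = a
  · subst hia
    rw [hγ, hsa, hsb]
    simp [hlt, hlt.le, hm.1.le, hm.2]
  by_cases hib : i = b
  · subst hib
    rw [hγ', hsa, hsb]
    simp [hlt, hlt.le, hm.1.le, hm.2]
  have hga : γ.val i ≠ a := fun h => hib (by rw [← γ.2.1 i, h, hγ])
  have hgb : γ.val i ≠ b := fun h => hia (by rw [← γ.2.1 i, h, hγ'])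
  rw [key i hia hib, key _ hga hgb]

/-- If `β ⟵ γ` and `γ` contains the link `{a, b}` then `β` has no slope at `a`. -/
lemma kwRel_cases (a b : Fin (2 * N)) (hab : b.val = a.val + 1) (β γ : PlanarPair N)
    (hγ : γ.val a = b) (h : kwRel β γ) : β.val a = b ∨ HasMinAt β a b := by
  have := h a
  rw [hγ] at this
  by_cases ha : a < β.val a
  · exact Or.inl (link_of_max β a b hab ha ((down_iff β b).1 (this.1 ha)))
  · refine Or.inr ⟨(down_iff β a).1 ha, ?_⟩
    by_contra hb
    exact ha (this.2 hb)

/-- Coefficients of `M⁻¹` in the row of `α ∌ {a, b}`: the entry at a partition `γ ∋ {a, b}` is minus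
the sum of the entries at the partitions with a local minimum at `a` that flip to `γ`.

With `w γ = e_γ + ∑ e_β` over those `β`, the columns of `M` indexed by the `γ ∋ {a, b}` are the
combinations of the `w γ'` given by the corresponding square submatrix `K` of `M`. Invertibility of
`M` forces that of `K`, hence `M⁻¹ w γ` is supported on partitions containing `{a, b}`. -/
lemma inv_row_relation (hdet : IsUnit (Mmat N).det) (a b : Fin (2 * N)) (hab : b.val = a.val + 1)
    (α : PlanarPair N) (hα : α.val a ≠ b) (γ : PlanarPair N) (hγ : γ.val a = b) :
    (Mmat N)⁻¹ α γ + ∑ β ∈ univ.filter (fun β => HasMinAt β a b ∧ surg' a b hab β = γ),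
      (Mmat N)⁻¹ α β = 0 := by
  let L := {γ : PlanarPair N // γ.val a = b}
  let K : Matrix L L ℝ := fun β γ => Mmat N β.1 γ.1
  let E : (L → ℝ) → (PlanarPair N → ℝ) := fun v β => if h : β.val a = b then v ⟨β, h⟩ else 0
  have hlt : a < b := by simp [Fin.lt_def, hab]
  have hdisj : ∀ β : PlanarPair N, β.val a = b → ¬ HasMinAt β a b := by
    intro β h h'; have := h'.1; rw [h] at this; exact hlt.not_gt this
  have hsL : ∀ β : PlanarPair N, HasMinAt β a b → (surg' a b hab β).val a = b := by
    intro β h; simp [surg', h, surg, surgFun]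
  have hsum : ∀ (v : L → ℝ) (β : PlanarPair N),
      (Mmat N).mulVec (E v) β = ∑ γ : L, Mmat N β γ.1 * v γ := by
    intro v β
    simp only [Matrix.mulVec, dotProduct, E, mul_dite, mul_zero]
    rw [← Finset.sum_filter_add_sum_filter_not univ (fun β : PlanarPair N => β.val a = b)]
    rw [Finset.sum_eq_zero (s := univ.filter (fun β : PlanarPair N => ¬ β.val a = b))
      (fun x hx => by simp only [mem_filter] at hx; simp [hx.2]), add_zero]
    rw [Finset.sum_subtype (p := fun β : PlanarPair N => β.val a = b) _ (by simp)]
    refine Finset.sum_congr rfl fun γ _ => ?_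
    simp [γ.2]
  have hME : ∀ (v : L → ℝ) (β : PlanarPair N), (Mmat N).mulVec (E v) β =
      if h : β.val a = b then K.mulVec v ⟨β, h⟩ else
        if h : HasMinAt β a b then K.mulVec v ⟨surg' a b hab β, hsL β h⟩ else 0 := by
    intro v β
    rw [hsum]
    split_ifs with h h'
    · rfl
    · simp only [Matrix.mulVec, dotProduct, K]
      refine Finset.sum_congr rfl fun γ _ => ?_
      simp only [Mmat, kwRel_surg a b hab β γ.1 h' γ.2]
    · refine Finset.sum_eq_zero fun γ _ => ?_
      have : ¬ kwRel β γ.1 := fun hk => (kwRel_cases a b hab β γ.1 γ.2 hk).elim h h'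
      simp [Mmat, this]
  have hMinj : Function.Injective (Mmat N).mulVec :=
    Matrix.mulVec_injective_iff_isUnit.2 ((Matrix.isUnit_iff_isUnit_det _).2 hdet)
  have hKinj : Function.Injective K.mulVec := by
    intro v w hvw
    have : E v = E w := hMinj (by funext β; rw [hME, hME, hvw])
    funext γ
    have := congrFun this γ.1
    simpa [E, γ.2] using this
  have hKsurj : Function.Surjective K.mulVec :=
    Matrix.mulVec_surjective_iff_isUnit.2 (Matrix.mulVec_injective_iff_isUnit.1 hKinj)
  obtain ⟨v, hv⟩ := hKsurj (Pi.single ⟨γ, hγ⟩ 1)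
  have hz : (Mmat N)⁻¹.mulVec ((Mmat N).mulVec (E v)) α = 0 := by
    rw [Matrix.mulVec_mulVec, Matrix.nonsing_inv_mul _ hdet, Matrix.one_mulVec]
    simp [E, hα]
  have hsingle : ∀ (β : PlanarPair N) (h : β.val a = b),
      (Pi.single (⟨γ, hγ⟩ : L) (1 : ℝ) : L → ℝ) ⟨β, h⟩ = if β = γ then 1 else 0 := by
    intro β h
    by_cases e : β = γ
    · subst e; simp
    · rw [Pi.single_eq_of_ne (fun h' => e (congrArg Subtype.val h')), if_neg e]
  have hw : (Mmat N).mulVec (E v) = fun β =>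
      (if β = γ then (1 : ℝ) else 0) + if HasMinAt β a b ∧ surg' a b hab β = γ then 1 else 0 := by
    funext β
    rw [hME, hv]
    by_cases h : β.val a = b
    · have := hdisj β h
      simp [h, this, hsingle]
    · have hne : β ≠ γ := by rintro rfl; exact h hγ
      by_cases h' : HasMinAt β a b
      · simp [h, h', hne, hsingle]
      · simp [h, h', hne]
  rw [hw] at hz
  simpa [Matrix.mulVec, dotProduct, mul_add, Finset.sum_add_distrib, Finset.sum_filter] using hz

lemma pairSign_pos (β : PlanarPair N) (i : Fin (2 * N)) : pairSign β i = 1 ↔ i < β.val i := by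
  unfold pairSign; split_ifs with h <;> simp [h]; norm_num

lemma pairSign_neg (β : PlanarPair N) (i : Fin (2 * N)) : pairSign β i = -1 ↔ β.val i < i := by
  rw [← down_iff]; unfold pairSign; split_ifs with h <;> simp [h]; norm_num

lemma pairSign_cases (β : PlanarPair N) (i : Fin (2 * N)) :
    pairSign β i = 1 ∨ pairSign β i = -1 := by
  unfold pairSign; split_ifs <;> simp

end Combinatorics

/-! ### The fusion limit -/

/-- Single fusion of a pure partition function at a position `j` with
`{j, j+1} ∉ α`: the normalized limit exists and equals `Z_{α/⨿_j}`.
(0-based indexing: the fused pair of variables sits at coordinates `j` and `j+1`,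
the fusion point `ξ` is the value of coordinate `j` of the limit configuration `x₀`.) -/
theorem pureZ_single_fusion (N : ℕ) (hN : 1 ≤ N) (α : PlanarPair N)
    (j : ℕ) (hj : j + 1 < 2 * N)
    (hlink : α.val ⟨j, by omega⟩ ≠ ⟨j + 1, hj⟩)
    (x₀ : Fin (2 * N) → ℝ) (hx₀ : x₀ ∈ fusedChamber (2 * N) j)
    (hfuse : x₀ ⟨j + 1, hj⟩ = x₀ ⟨j, by omega⟩) :
    Tendsto
      (fun x : Fin (2 * N) → ℝ =>
        pureZ α x / (x ⟨j + 1, hj⟩ - x ⟨j, by omega⟩) ^ ((1 : ℝ) / 2))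
      (𝓝[chamber (2 * N)] x₀) (𝓝 (Zfuse α j hj x₀)) := by
  -- Invertibility of `Mmat N` costs nothing: otherwise the junk value `(Mmat N)⁻¹ = 0` makes both
  -- sides vanish identically.
  by_cases hdet : IsUnit (Mmat N).det
  swap
  · have h0 : (Mmat N)⁻¹ = 0 := Matrix.nonsing_inv_apply_not_isUnit _ hdet
    simp only [pureZ, Zfuse, h0, Matrix.zero_apply, zero_mul, Finset.sum_const_zero, zero_div,
      add_zero]
    exact tendsto_const_nhds
  set a : Fin (2 * N) := ⟨j, by omega⟩ with hadef
  set b : Fin (2 * N) := ⟨j + 1, hj⟩ with hbdef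
  have hab : b.val = a.val + 1 := rfl
  have hlt : a < b := by simp [Fin.lt_def, hab]
  let s := surg' a b hab
  have hmin : ∀ β : PlanarPair N, (pairSign β a = -1 ∧ pairSign β b = 1) ↔ HasMinAt β a b := by
    intro β; rw [pairSign_neg, pairSign_pos]; rfl
  have hsL : ∀ β : PlanarPair N, HasMinAt β a b → (s β).val a = b := by
    intro β h; simp [s, surg', h, surg, surgFun]
  have hsign : ∀ β : PlanarPair N, β.val a = b → pairSign β a = 1 ∧ pairSign β b = -1 := by
    intro β h
    rw [pairSign_pos, pairSign_neg]
    have : β.val b = a := by rw [← h]; exact β.2.1 a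
    rw [this, h]; exact ⟨hlt, hlt⟩
  have hmax : ∀ β : PlanarPair N, pairSign β a = 1 → pairSign β b = -1 → β.val a = b := by
    intro β h hdown
    exact link_of_max β a b hab ((pairSign_pos _ _).1 h) ((pairSign_neg _ _).1 hdown)
  -- Each term of a `γ ∋ {a, b}` is redistributed over the local minima that flip to `γ`.
  have hZ : ∀ x, pureZ α x =
      (∑ β ∈ univ.filter (fun β : PlanarPair N => pairSign β a = -1 ∧ pairSign β b = 1),
        (Mmat N)⁻¹ α β * (cblock (pairSign β) x - cblock (pairSign (s β)) x)) +
      ∑ β ∈ univ.filter (fun β : PlanarPair N => pairSign β a = pairSign β b),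
        (Mmat N)⁻¹ α β * cblock (pairSign β) x := by
    intro x
    have hL : ∑ γ ∈ univ.filter (fun γ : PlanarPair N => γ.val a = b),
        (Mmat N)⁻¹ α γ * cblock (pairSign γ) x =
        - ∑ β ∈ univ.filter (fun β : PlanarPair N => pairSign β a = -1 ∧ pairSign β b = 1),
          (Mmat N)⁻¹ α β * cblock (pairSign (s β)) x := by
      rw [← Finset.sum_fiberwise_of_maps_to
        (s := univ.filter (fun β : PlanarPair N => pairSign β a = -1 ∧ pairSign β b = 1))
        (t := univ.filter (fun γ : PlanarPair N => γ.val a = b)) (g := s)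
        (fun β hβ => by
          simp only [mem_filter, mem_univ, true_and, hmin] at hβ ⊢
          exact hsL β hβ), ← Finset.sum_neg_distrib]
      refine Finset.sum_congr rfl fun γ hγ => ?_
      simp only [mem_filter, mem_univ, true_and] at hγ
      have hrel := inv_row_relation hdet a b hab α hlink γ hγ
      rw [eq_neg_of_add_eq_zero_left hrel, neg_mul, Finset.sum_mul, Finset.filter_filter]
      simp only [hmin]
      congr 1
      refine Finset.sum_congr rfl fun β hβ => ?_
      simp only [mem_filter, mem_univ, true_and] at hβ
      simp only [s, hβ.2]
    simp only [mul_sub, Finset.sum_sub_distrib]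
    rw [sub_eq_add_neg, ← hL]
    unfold pureZ
    simp only [Finset.sum_filter, ← Finset.sum_add_distrib]
    refine Finset.sum_congr rfl fun β _ => ?_
    rcases pairSign_cases β a with h | h <;> rcases pairSign_cases β b with h' | h'
    · have : β.val a ≠ b := fun e => by have := (hsign β e).2; rw [h'] at this; norm_num at this
      norm_num [h, h', this]
    · norm_num [h, h', hmax β h h']
    · have : β.val a ≠ b := fun e => by have := (hsign β e).2; rw [h'] at this; norm_num at this
      norm_num [h, h', this]
    · have : β.val a ≠ b := fun e => by have := (hsign β e).1; rw [h] at this; norm_num at this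
      norm_num [h, h', this]
  simp only [hZ, add_div, Finset.sum_div, mul_div_assoc]
  unfold Zfuse
  refine Tendsto.add (tendsto_finsetSum _ fun β hβ => Tendsto.const_mul _ ?_)
    (tendsto_finsetSum _ fun β hβ => Tendsto.const_mul _ ?_)
  · simp only [mem_filter, mem_univ, true_and] at hβ
    have hm := (hmin β).1 hβ
    have hs := hsign _ (hsL β hm)
    refine flip_limit (pairSign β) (pairSign (s β)) hj hx₀ hfuse hβ.1 hβ.2 hs.1 hs.2 ?_
    intro i hi
    simp only [others, mem_filter, mem_univ, true_and] at hi
    have := surg_up β a b hab hm.1 hm.2 i (by rintro rfl; exact hi.1 rfl)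
      (by rintro rfl; exact hi.2 rfl)
    have hs' : s β = surg β a b hab hm.1 hm.2 := by simp [s, surg', hm]
    unfold pairSign
    rw [hs']
    simp only [this]
  · simp only [mem_filter, mem_univ, true_and] at hβ
    exact slope_limit (pairSign β) hj hx₀ hfuse hβ (pairSign_cases β a)
end
end

section
/- Let N ≥ 1, let α ∈ Pair_N and let j ∈ {1,…,2N−1} with {j,j+1} ∉ α. Then the function F = Z_{α/⨿_j} of the variables (x_1,…,x_{j−1},ξ,x_{j+2},…,x_{2N}) satisfies, for every n ∈ {1,…,2N}∖{j,j+1} and at every point of the chamber x_1<⋯<x_{j−1}<ξ<x_{j+2}<⋯<x_{2N}, the second-order PDE (κ=4, h=1/4, H=1): ∂²F/∂x_n² = Σ_{i∉{j,j+1,n}} ( (1/4)·F/(x_i−x_n)² − (∂F/∂x_i)/(x_i−x_n) ) + F/(ξ−x_n)² − (∂F/∂ξ)/(ξ−x_n). -/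
/-! The PDE holds for each summand of `Zfuse` separately, so by linearity only the functions
`Ufuse σ` and `Vfuse σ`, with `σ` a sequence of signs, have to be treated.

On the fused chamber both have the form `exp (L s) * S`, where
`L s x = (1/4) ∑ p, ∑ q, s p * s q * log (x p - x q)` is a Coulomb gas energy with charges `s`.
For `Ufuse` one takes `S = 1` and charges `σ` away from `j, j+1`, charge `2 σ_j` at `j` and `0` at
`j+1`. For `Vfuse` the charges at `j` and `j+1` both vanish, and
`S = σ_j ∑ i, s i / (x i - ξ)`.

With `A i = ∂_i (L s) = (1/2) ∑ q, s i * s q / (x i - x q)`, a charge `s n` of square one gives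
`A_n² + ∂_n A_n = ∑ i, ((s i)² / 4 / (x i - x n)² - A_i / (x i - x n))` (`coulomb_identity`),
by symmetrising the double sum of `s i * s k / ((x i - x k) (x i - x n))`. This is the whole PDE
for `Ufuse`, since the charge `2 σ_j` has weight `(2 σ_j)² / 4 = 1`. For `Vfuse` there remains an
identity that is linear in `S` and holds summand by summand (`vertex_identity`).

Throughout, sums run over all indices: the conventions `log 0 = 0` and `a / 0 = 0` remove the
diagonal terms, and zero charges remove the points that do not take part. -/

open Filter Finset
open scoped BigOperators Classical Topology

noncomputable section

/-! ### Partial derivatives -/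

section PartialDerivatives

variable {m : ℕ}

theorem pd_add {F G : (Fin m → ℝ) → ℝ} {x : Fin m → ℝ} (i : Fin m)
    (hF : DifferentiableAt ℝ F x) (hG : DifferentiableAt ℝ G x) :
    pd i (fun y => F y + G y) x = pd i F x + pd i G x := by
  unfold pd
  rw [fderiv_fun_add hF hG]; rfl

theorem pd_mul {F G : (Fin m → ℝ) → ℝ} {x : Fin m → ℝ} (i : Fin m)
    (hF : DifferentiableAt ℝ F x) (hG : DifferentiableAt ℝ G x) :
    pd i (fun y => F y * G y) x = pd i F x * G x + F x * pd i G x := by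
  unfold pd
  rw [fderiv_fun_mul hF hG]
  simp
  ring

theorem pd_const_mul {F : (Fin m → ℝ) → ℝ} {x : Fin m → ℝ} (i : Fin m) (c : ℝ)
    (hF : DifferentiableAt ℝ F x) :
    pd i (fun y => c * F y) x = c * pd i F x := by
  unfold pd
  rw [fderiv_const_mul hF]
  simp

theorem pd_const (i : Fin m) (c : ℝ) (x : Fin m → ℝ) : pd i (fun _ => c) x = 0 := by
  simp [pd]

theorem pd_exp {F : (Fin m → ℝ) → ℝ} {x : Fin m → ℝ} (i : Fin m)
    (hF : DifferentiableAt ℝ F x) :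
    pd i (fun y => Real.exp (F y)) x = Real.exp (F x) * pd i F x := by
  unfold pd
  rw [fderiv_exp hF]
  simp

theorem pd_congr {F G : (Fin m → ℝ) → ℝ} {x : Fin m → ℝ} (i : Fin m)
    (h : F =ᶠ[𝓝 x] G) : pd i F x = pd i G x := by
  unfold pd
  rw [h.fderiv_eq]

end PartialDerivatives

/-! ### The linear space of solutions -/

section Solutions

variable {m : ℕ}

theorem isOpen_fusedChamber (m j : ℕ) : IsOpen (fusedChamber m j) := by
  have : fusedChamber m j = ⋂ k : Fin m, ⋂ l : Fin m,
      {x | k < l → k.val ≠ j + 1 → l.val ≠ j + 1 → x k < x l} := by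
    ext x; simp [fusedChamber]
  rw [this]
  refine isOpen_iInter_of_finite fun k => isOpen_iInter_of_finite fun l => ?_
  by_cases h : k < l ∧ k.val ≠ j + 1 ∧ l.val ≠ j + 1
  · have : {x : Fin m → ℝ | k < l → k.val ≠ j + 1 → l.val ≠ j + 1 → x k < x l}
        = {x | x k < x l} := by
      ext x; simp only [Set.mem_ofPred_eq]; tauto
    rw [this]
    exact isOpen_lt (continuous_apply k) (continuous_apply l)
  · have : {x : Fin m → ℝ | k < l → k.val ≠ j + 1 → l.val ≠ j + 1 → x k < x l}
        = Set.univ := by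
      ext x; simp only [Set.mem_ofPred_eq, Set.mem_univ, iff_true]; tauto
    rw [this]
    exact isOpen_univ

theorem fusedChamber_ne {j : ℕ} {x : Fin m → ℝ} (hx : x ∈ fusedChamber m j) {k l : Fin m}
    (hkl : k ≠ l) (hk : k.val ≠ j + 1) (hl : l.val ≠ j + 1) : x k ≠ x l := by
  rcases lt_or_gt_of_ne hkl with h | h
  · exact (hx k l h hk hl).ne
  · exact (hx l k h hl hk).ne'

/-- `F` solves the second-order PDE in the variable `x_n` on the fused chamber, and `F` and `∂_n F`
are differentiable there, so that solutions form a linear space. -/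
def Sol (j : ℕ) (hj : j + 1 < m) (n : Fin m) (F : (Fin m → ℝ) → ℝ) : Prop :=
  ∀ x ∈ fusedChamber m j, DifferentiableAt ℝ F x ∧ DifferentiableAt ℝ (pd n F) x ∧
    pd n (pd n F) x =
      (∑ i ∈ univ.filter (fun i : Fin m => i.val ≠ j ∧ i.val ≠ j + 1 ∧ i ≠ n),
        ((1 / 4) * F x / (x i - x n) ^ 2 - pd i F x / (x i - x n))) +
      F x / (x ⟨j, by omega⟩ - x n) ^ 2 -
      pd ⟨j, by omega⟩ F x / (x ⟨j, by omega⟩ - x n)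

theorem Sol.congr {j : ℕ} {hj : j + 1 < m} {n : Fin m} {F G : (Fin m → ℝ) → ℝ}
    (hF : Sol j hj n F) (h : ∀ x ∈ fusedChamber m j, G x = F x) : Sol j hj n G := by
  have ev : ∀ x ∈ fusedChamber m j, G =ᶠ[𝓝 x] F := fun x hx =>
    Filter.eventually_of_mem ((isOpen_fusedChamber m j).mem_nhds hx) h
  have hp : ∀ i : Fin m, ∀ x ∈ fusedChamber m j, pd i G x = pd i F x := fun i x hx =>
    pd_congr i (ev x hx)
  intro x hx
  have ev' : pd n G =ᶠ[𝓝 x] pd n F :=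
    Filter.eventually_of_mem ((isOpen_fusedChamber m j).mem_nhds hx) (hp n)
  obtain ⟨h1, h2, h3⟩ := hF x hx
  refine ⟨h1.congr_of_eventuallyEq (ev x hx), h2.congr_of_eventuallyEq ev', ?_⟩
  rw [pd_congr n ev', h3, h x hx]
  simp only [hp _ x hx]

theorem Sol.zero {j : ℕ} {hj : j + 1 < m} {n : Fin m} : Sol j hj n (fun _ => 0) := by
  intro x hx
  have h : ∀ i : Fin m, pd i (fun _ : Fin m → ℝ => (0 : ℝ)) = fun _ => 0 := by
    intro i; ext y; exact pd_const i 0 y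
  simp [h]

theorem Sol.add {j : ℕ} {hj : j + 1 < m} {n : Fin m} {F G : (Fin m → ℝ) → ℝ}
    (hF : Sol j hj n F) (hG : Sol j hj n G) : Sol j hj n (fun x => F x + G x) := by
  have hp : ∀ i : Fin m, ∀ x ∈ fusedChamber m j,
      pd i (fun x => F x + G x) x = pd i F x + pd i G x := fun i x hx =>
    pd_add i (hF x hx).1 (hG x hx).1
  intro x hx
  have ev' : pd n (fun x => F x + G x) =ᶠ[𝓝 x] fun x => pd n F x + pd n G x :=
    Filter.eventually_of_mem ((isOpen_fusedChamber m j).mem_nhds hx) (hp n)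
  obtain ⟨f1, f2, f3⟩ := hF x hx
  obtain ⟨g1, g2, g3⟩ := hG x hx
  refine ⟨f1.add g1, (f2.add g2).congr_of_eventuallyEq ev', ?_⟩
  rw [pd_congr n ev', pd_add n f2 g2, f3, g3]
  simp only [hp _ x hx]
  have : ∀ a b c d e f : ℝ, ∀ a' b' c' : ℝ, a' = a + d → b' = b + e → c' = c + f →
      a + b - c + (d + e - f) = a' + b' - c' := by intros; subst_vars; ring
  apply this
  · rw [← Finset.sum_add_distrib]
    exact Finset.sum_congr rfl fun i _ => by ring
  · ring
  · ring

theorem Sol.const_mul {j : ℕ} {hj : j + 1 < m} {n : Fin m} {F : (Fin m → ℝ) → ℝ} (c : ℝ)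
    (hF : Sol j hj n F) : Sol j hj n (fun x => c * F x) := by
  have hp : ∀ i : Fin m, ∀ x ∈ fusedChamber m j,
      pd i (fun x => c * F x) x = c * pd i F x := fun i x hx =>
    pd_const_mul i c (hF x hx).1
  intro x hx
  have ev' : pd n (fun x => c * F x) =ᶠ[𝓝 x] fun x => c * pd n F x :=
    Filter.eventually_of_mem ((isOpen_fusedChamber m j).mem_nhds hx) (hp n)
  obtain ⟨f1, f2, f3⟩ := hF x hx
  refine ⟨f1.const_mul c, (f2.const_mul c).congr_of_eventuallyEq ev', ?_⟩
  rw [pd_congr n ev', pd_const_mul n c f2, f3]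
  simp only [hp _ x hx]
  rw [mul_sub, mul_add, Finset.mul_sum]
  congr 1
  · congr 1
    · exact Finset.sum_congr rfl fun i _ => by ring
    · ring
  · ring

theorem Sol.sum {ι : Type*} {j : ℕ} {hj : j + 1 < m} {n : Fin m} (s : Finset ι)
    {F : ι → (Fin m → ℝ) → ℝ} (hF : ∀ i ∈ s, Sol j hj n (F i)) :
    Sol j hj n (fun x => ∑ i ∈ s, F i x) := by
  induction s using Finset.induction_on with
  | empty => simpa using Sol.zero
  | insert a s ha ih =>
    simp only [Finset.sum_insert ha]
    exact (hF a (Finset.mem_insert_self a s)).add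
      (ih fun i hi => hF i (Finset.mem_insert_of_mem hi))

/-- The PDE for `exp L * S`, after division by `exp L`; here `A i = ∂_i L` and `B i = ∂_i S`. -/
theorem Sol.of_exp_mul {j : ℕ} {hj : j + 1 < m} {n : Fin m} {L S : (Fin m → ℝ) → ℝ}
    {A B : Fin m → (Fin m → ℝ) → ℝ}
    (hL : ∀ x ∈ fusedChamber m j, DifferentiableAt ℝ L x)
    (hS : ∀ x ∈ fusedChamber m j, DifferentiableAt ℝ S x)
    (hLA : ∀ i, ∀ x ∈ fusedChamber m j, pd i L x = A i x)
    (hSB : ∀ i, i.val ≠ j + 1 → ∀ x ∈ fusedChamber m j, pd i S x = B i x)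
    (hA : ∀ x ∈ fusedChamber m j, DifferentiableAt ℝ (A n) x)
    (hB : ∀ x ∈ fusedChamber m j, DifferentiableAt ℝ (B n) x)
    (hn : n.val ≠ j + 1)
    (heq : ∀ x ∈ fusedChamber m j,
      (A n x ^ 2 + pd n (A n) x) * S x + 2 * A n x * B n x + pd n (B n) x =
      (∑ i ∈ univ.filter (fun i : Fin m => i.val ≠ j ∧ i.val ≠ j + 1 ∧ i ≠ n),
        ((1 / 4) * S x / (x i - x n) ^ 2 - (A i x * S x + B i x) / (x i - x n))) +
      S x / (x ⟨j, by omega⟩ - x n) ^ 2 -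
      (A ⟨j, by omega⟩ x * S x + B ⟨j, by omega⟩ x) / (x ⟨j, by omega⟩ - x n)) :
    Sol j hj n (fun x => Real.exp (L x) * S x) := by
  have hp : ∀ i : Fin m, i.val ≠ j + 1 → ∀ x ∈ fusedChamber m j,
      pd i (fun x => Real.exp (L x) * S x) x = Real.exp (L x) * (A i x * S x + B i x) := by
    intro i hi x hx
    rw [pd_mul i (hL x hx).exp (hS x hx), pd_exp i (hL x hx), hLA i x hx, hSB i hi x hx]
    ring
  intro x hx
  have ev' : pd n (fun x => Real.exp (L x) * S x) =ᶠ[𝓝 x]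
      fun x => Real.exp (L x) * (A n x * S x + B n x) :=
    Filter.eventually_of_mem ((isOpen_fusedChamber m j).mem_nhds hx) (hp n hn)
  have d1 : DifferentiableAt ℝ (fun x => A n x * S x) x := (hA x hx).mul (hS x hx)
  have d2 : DifferentiableAt ℝ (fun x => A n x * S x + B n x) x := d1.add (hB x hx)
  refine ⟨(hL x hx).exp.mul (hS x hx),
    ((hL x hx).exp.mul d2).congr_of_eventuallyEq ev', ?_⟩
  rw [pd_congr n ev', pd_mul n (hL x hx).exp d2, pd_exp n (hL x hx), hLA n x hx,
    pd_add n d1 (hB x hx), pd_mul n (hA x hx) (hS x hx), hSB n hn x hx, hp _ (by simp) x hx]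
  have h := congrArg (fun t => Real.exp (L x) * t) (heq x hx)
  simp only at h
  calc _ = Real.exp (L x) * ((A n x ^ 2 + pd n (A n) x) * S x + 2 * A n x * B n x
        + pd n (B n) x) := by ring
    _ = _ := by
      rw [h, mul_sub, mul_add, Finset.mul_sum]
      congr 1
      · congr 1
        · refine Finset.sum_congr rfl fun i hi => ?_
          rw [hp i (Finset.mem_filter.1 hi).2.2.1 x hx]
          ring
        · ring
      · ring

end Solutions

/-! ### The Coulomb gas energy -/

section Coulomb

variable {m : ℕ}

/-- The Coulomb gas energy `∑_{p < q} (s_p s_q / 2) log |x_q - x_p|`, written as a sum over all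
ordered pairs; the diagonal contributes nothing as `log 0 = 0`. -/
def coulomb (s x : Fin m → ℝ) : ℝ :=
  1 / 4 * ∑ p, ∑ q, s p * s q * Real.log (x p - x q)

/-- The partial derivative `∂_i` of `coulomb s`; the summand `q = i` vanishes as `a / 0 = 0`. -/
def coulombGrad (s : Fin m → ℝ) (i : Fin m) (x : Fin m → ℝ) : ℝ :=
  1 / 2 * ∑ q, s i * s q * (x i - x q)⁻¹

/-- Points that carry a nonzero charge are pairwise distinct. -/
def Separated (s x : Fin m → ℝ) : Prop :=
  ∀ p q, p ≠ q → s p ≠ 0 → s q ≠ 0 → x p ≠ x q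

theorem hasFDerivAt_coulomb {s x : Fin m → ℝ} (h : Separated s x) :
    HasFDerivAt (coulomb s) ((1 / 4 : ℝ) • ∑ p, ∑ q, (s p * s q * (x p - x q)⁻¹) •
      (ContinuousLinearMap.proj (R := ℝ) (φ := fun _ : Fin m => ℝ) p
        - ContinuousLinearMap.proj q)) x := by
  unfold coulomb
  refine HasFDerivAt.const_mul ?_ (1 / 4)
  refine HasFDerivAt.fun_sum fun p _ => HasFDerivAt.fun_sum fun q _ => ?_
  by_cases hpq : p = q
  · subst hpq
    simpa using hasFDerivAt_const (0 : ℝ) x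
  by_cases hp : s p = 0
  · simpa [hp] using hasFDerivAt_const (0 : ℝ) x
  by_cases hq : s q = 0
  · simpa [hq] using hasFDerivAt_const (0 : ℝ) x
  have hne : x p - x q ≠ 0 := sub_ne_zero.2 (h p q hpq hp hq)
  have h1 : HasFDerivAt (fun y : Fin m → ℝ => y p - y q)
      (ContinuousLinearMap.proj (R := ℝ) (φ := fun _ : Fin m => ℝ) p
        - ContinuousLinearMap.proj q) x :=
    (hasFDerivAt_apply p x).sub (hasFDerivAt_apply q x)
  have h2 := (h1.log hne).const_mul (s p * s q)
  rwa [smul_smul] at h2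

theorem pd_coulomb {s x : Fin m → ℝ} (h : Separated s x) (i : Fin m) :
    pd i (coulomb s) x = coulombGrad s i x := by
  unfold pd coulombGrad
  rw [(hasFDerivAt_coulomb h).fderiv]
  simp only [smul_apply, _root_.sum_apply,
    sub_apply, ContinuousLinearMap.proj_apply, smul_eq_mul, mul_sub,
    Finset.sum_sub_distrib, Pi.single_apply, mul_ite, mul_one, mul_zero]
  rw [Finset.sum_comm]
  simp only [Finset.sum_ite_eq', Finset.mem_univ, if_true]
  have : ∀ q, s q * s i * (x q - x i)⁻¹ = - (s i * s q * (x i - x q)⁻¹) := by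
    intro q
    rw [← neg_sub (x i) (x q), inv_neg]; ring
  simp only [this, Finset.sum_neg_distrib]
  ring

theorem hasFDerivAt_coulombGrad {s x : Fin m → ℝ} (h : Separated s x) (n : Fin m) :
    HasFDerivAt (coulombGrad s n) ((1 / 2 : ℝ) • ∑ q, (-(s n * s q * ((x n - x q) ^ 2)⁻¹)) •
      (ContinuousLinearMap.proj (R := ℝ) (φ := fun _ : Fin m => ℝ) n
        - ContinuousLinearMap.proj q)) x := by
  unfold coulombGrad
  refine HasFDerivAt.const_mul ?_ (1 / 2)
  refine HasFDerivAt.fun_sum fun q _ => ?_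
  by_cases hpq : n = q
  · subst hpq
    simpa using hasFDerivAt_const (0 : ℝ) x
  by_cases hp : s n = 0
  · simpa [hp] using hasFDerivAt_const (0 : ℝ) x
  by_cases hq : s q = 0
  · simpa [hq] using hasFDerivAt_const (0 : ℝ) x
  have hne : x n - x q ≠ 0 := sub_ne_zero.2 (h n q hpq hp hq)
  have h1 : HasFDerivAt (fun y : Fin m → ℝ => y n - y q)
      (ContinuousLinearMap.proj (R := ℝ) (φ := fun _ : Fin m => ℝ) n
        - ContinuousLinearMap.proj q) x :=
    (hasFDerivAt_apply n x).sub (hasFDerivAt_apply q x)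
  have h2 := ((hasDerivAt_inv hne).comp_hasFDerivAt x h1).const_mul (s n * s q)
  rw [smul_smul, mul_neg] at h2
  exact h2

theorem pd_coulombGrad {s x : Fin m → ℝ} (h : Separated s x) (n : Fin m) :
    pd n (coulombGrad s n) x = -(1 / 2 * ∑ q, s n * s q * ((x n - x q) ^ 2)⁻¹) := by
  unfold pd
  rw [(hasFDerivAt_coulombGrad h n).fderiv]
  simp only [smul_apply, _root_.sum_apply,
    sub_apply, ContinuousLinearMap.proj_apply, smul_eq_mul, mul_sub,
    Finset.sum_sub_distrib, Pi.single_apply, mul_ite, mul_one, mul_zero]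
  simp

/-- The symmetrised kernel of the double sum in `coulomb_identity`. The three `if` terms account
for the junk value `0⁻¹ = 0` on the diagonal `i = k` and at `i = n` or `k = n`. -/
theorem coulomb_kernel {s x : Fin m → ℝ} (h : Separated s x) {n : Fin m} (hn : s n ≠ 0)
    (i k : Fin m) :
    s i * s k * (x i - x k)⁻¹ * (x i - x n)⁻¹ + s k * s i * (x k - x i)⁻¹ * (x k - x n)⁻¹
      = -(s i * (x n - x i)⁻¹ * (s k * (x n - x k)⁻¹))
        + (if i = k then s i ^ 2 * ((x i - x n) ^ 2)⁻¹ else 0)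
        + (if i = n then s n * s k * ((x n - x k) ^ 2)⁻¹ else 0)
        + (if k = n then s n * s i * ((x n - x i) ^ 2)⁻¹ else 0) := by
  by_cases hi : s i = 0
  · by_cases hin : i = n
    · exact absurd (hin ▸ hi) hn
    simp [hi, hin]
  by_cases hk : s k = 0
  · by_cases hkn : k = n
    · exact absurd (hkn ▸ hk) hn
    by_cases hik : i = k
    · exact absurd (hik ▸ hk) hi
    simp [hk, hkn, hik]
  by_cases hik : i = k
  · subst hik
    by_cases hin : i = n
    · subst hin; simp
    · have := sub_ne_zero.2 (h i n hin hi hn)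
      have := sub_ne_zero.2 (h n i (Ne.symm hin) hn hi)
      simp only [hin, sub_self, inv_zero, if_true, if_false]
      rw [← neg_sub (x i) (x n), inv_neg]
      field_simp
      ring
  by_cases hin : i = n
  · subst hin
    have := sub_ne_zero.2 (h k i (Ne.symm hik) hk hi)
    have := sub_ne_zero.2 (h i k hik hi hk)
    simp only [hik, Ne.symm hik, sub_self, inv_zero, if_true, if_false]
    rw [← neg_sub (x k) (x i), neg_sq]
    field_simp
    ring
  by_cases hkn : k = n
  · subst hkn
    have := sub_ne_zero.2 (h k i (Ne.symm hik) hk hi)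
    have := sub_ne_zero.2 (h i k hik hi hk)
    simp only [hik, sub_self, inv_zero, if_true, if_false]
    rw [← neg_sub (x i) (x k), neg_sq]
    field_simp
    ring
  · have h1 := sub_ne_zero.2 (h i k hik hi hk)
    have h2 := sub_ne_zero.2 (h i n hin hi hn)
    have h3 := sub_ne_zero.2 (h k n hkn hk hn)
    simp only [hik, hin, hkn, if_false]
    rw [← neg_sub (x i) (x k), ← neg_sub (x i) (x n), ← neg_sub (x k) (x n)]
    simp only [inv_neg]
    field_simp
    ring

theorem coulomb_identity {s x : Fin m → ℝ} (h : Separated s x) {n : Fin m} (hn : s n ^ 2 = 1) :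
    coulombGrad s n x ^ 2 + pd n (coulombGrad s n) x =
      ∑ i, (s i ^ 2 / 4 / (x i - x n) ^ 2 - coulombGrad s i x / (x i - x n)) := by
  have hn0 : s n ≠ 0 := by rintro h0; simp [h0] at hn
  set T := ∑ i, ∑ k, s i * s k * (x i - x k)⁻¹ * (x i - x n)⁻¹ with hT
  set R := ∑ q, s n * s q * ((x n - x q) ^ 2)⁻¹ with hR
  set Q := ∑ i, s i ^ 2 * ((x i - x n) ^ 2)⁻¹ with hQ
  set P := ∑ i, s i * (x n - x i)⁻¹ with hP
  have h2T : T + T = -(P * P) + Q + R + R := by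
    have hcomm : T = ∑ i, ∑ k, s k * s i * (x k - x i)⁻¹ * (x k - x n)⁻¹ := by
      rw [hT, Finset.sum_comm]
    conv_lhs => arg 2; rw [hcomm]
    rw [hT, ← Finset.sum_add_distrib]
    simp only [← Finset.sum_add_distrib, coulomb_kernel h hn0]
    simp only [Finset.sum_add_distrib, Finset.sum_neg_distrib]
    simp [Finset.sum_mul_sum, hP, hQ, hR]
  have hG : coulombGrad s n x = 1 / 2 * (s n * P) := by
    unfold coulombGrad
    simp only [hP, Finset.mul_sum, mul_assoc]
  have hRHS : ∑ i, (s i ^ 2 / 4 / (x i - x n) ^ 2 - coulombGrad s i x / (x i - x n))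
      = 1 / 4 * Q - 1 / 2 * T := by
    rw [Finset.sum_sub_distrib, hQ, hT, Finset.mul_sum, Finset.mul_sum]
    congr 1
    · exact Finset.sum_congr rfl fun i _ => by ring
    · refine Finset.sum_congr rfl fun i _ => ?_
      rw [coulombGrad, ← Finset.sum_mul]
      ring
  rw [hRHS, pd_coulombGrad h, hG]
  have : (1 / 2 * (s n * P)) ^ 2 = 1 / 4 * (P * P) := by
    rw [mul_pow, mul_pow, hn]; ring
  rw [this]
  linarith

theorem sum_sum_eq_two_mul {g : Fin m → Fin m → ℝ} (hsymm : ∀ p q, g p q = g q p)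
    (hdiag : ∀ p, g p p = 0) :
    ∑ p, ∑ q, g p q = 2 * ∑ p, ∑ q, if p < q then g p q else 0 := by
  have h1 : ∀ p q, g p q = (if p < q then g p q else 0) + (if q < p then g q p else 0) := by
    intro p q
    rcases lt_trichotomy p q with h | h | h
    · simp [h, h.le]
    · subst h; simp [hdiag]
    · simp [h, h.not_gt, hsymm p q]
  calc ∑ p, ∑ q, g p q
      = ∑ p, ∑ q, ((if p < q then g p q else 0) + (if q < p then g q p else 0)) :=
        Finset.sum_congr rfl fun p _ => Finset.sum_congr rfl fun q _ => h1 p q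
    _ = (∑ p, ∑ q, if p < q then g p q else 0) + ∑ p, ∑ q, if q < p then g q p else 0 := by
        simp only [Finset.sum_add_distrib]
    _ = _ := by
        rw [Finset.sum_comm (f := fun p q : Fin m => if q < p then g q p else (0 : ℝ))]
        ring

end Coulomb

/-! ### The fused conformal blocks as exponentials -/

section Blocks

variable {m : ℕ}

/-- The charges `σ` with the points `j` and `j + 1` discharged. -/
def offCharge (σ : Fin m → ℝ) (j : ℕ) (i : Fin m) : ℝ :=
  if i.val ≠ j ∧ i.val ≠ j + 1 then σ i else 0

/-- The charges of a slope fused at `j`: charge `2 σ_j` at the point `j`, and none at `j + 1`. -/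
def slopeCharge (σ : Fin m → ℝ) (j : ℕ) (i : Fin m) : ℝ :=
  offCharge σ j i + if i.val = j then 2 * σ i else 0

theorem separated_of_fusedChamber {s x : Fin m → ℝ} {j : ℕ} (hs : ∀ i, i.val = j + 1 → s i = 0)
    (hx : x ∈ fusedChamber m j) : Separated s x := fun p q hpq hp hq =>
  fusedChamber_ne hx hpq (fun h => hp (hs p h)) (fun h => hq (hs q h))

theorem prod_eq_exp_coulomb (σ : Fin m → ℝ) {j : ℕ} {x : Fin m → ℝ}
    (hx : x ∈ fusedChamber m j) :
    (∏ p ∈ univ.filter (fun p : Fin m × Fin m =>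
      p.1 < p.2 ∧ p.1.val ≠ j ∧ p.1.val ≠ j + 1 ∧ p.2.val ≠ j ∧ p.2.val ≠ j + 1),
      (x p.2 - x p.1) ^ (σ p.1 * σ p.2 / 2)) = Real.exp (coulomb (offCharge σ j) x) := by
  have h1 : ∀ p ∈ univ.filter (fun p : Fin m × Fin m =>
      p.1 < p.2 ∧ p.1.val ≠ j ∧ p.1.val ≠ j + 1 ∧ p.2.val ≠ j ∧ p.2.val ≠ j + 1),
      (x p.2 - x p.1) ^ (σ p.1 * σ p.2 / 2)
        = Real.exp (Real.log (x p.1 - x p.2) * (σ p.1 * σ p.2 / 2)) := by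
    intro p hp
    obtain ⟨hlt, h1, h2, h3, h4⟩ := (Finset.mem_filter.1 hp).2
    rw [Real.rpow_def_of_pos (sub_pos.2 (hx p.1 p.2 hlt h2 h4)), ← neg_sub, Real.log_neg_eq_log]
  rw [Finset.prod_congr rfl h1, ← Real.exp_sum]
  congr 1
  unfold coulomb
  rw [sum_sum_eq_two_mul, Finset.sum_filter, Fintype.sum_prod_type, ← mul_assoc, Finset.mul_sum]
  · refine Finset.sum_congr rfl fun p _ => ?_
    rw [Finset.mul_sum]
    refine Finset.sum_congr rfl fun q _ => ?_
    by_cases hlt : p < q <;> by_cases a : p.val ≠ j ∧ p.val ≠ j + 1 <;>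
      by_cases b : q.val ≠ j ∧ q.val ≠ j + 1
    · simp [offCharge, hlt, a, b]; ring
    all_goals
      simp only [offCharge, hlt, a, b]
      simp
      try tauto
  · intro p q
    rw [← neg_sub, Real.log_neg_eq_log]; ring
  · intro p; simp

theorem Vfuse_eq (σ : Fin m → ℝ) {j : ℕ} (hj : j + 1 < m) {x : Fin m → ℝ}
    (hx : x ∈ fusedChamber m j) :
    Vfuse σ j hj x = Real.exp (coulomb (offCharge σ j) x) *
      (σ ⟨j, by omega⟩ * ∑ i, offCharge σ j i * (x i - x ⟨j, by omega⟩)⁻¹) := by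
  unfold Vfuse
  rw [prod_eq_exp_coulomb σ hx]
  congr 1
  rw [Finset.sum_filter, Finset.mul_sum]
  refine Finset.sum_congr rfl fun i _ => ?_
  unfold offCharge
  split_ifs
  · ring
  · ring

theorem coulomb_slopeCharge (σ : Fin m → ℝ) {j : ℕ} (hj : j + 1 < m) (x : Fin m → ℝ) :
    coulomb (slopeCharge σ j) x = coulomb (offCharge σ j) x +
      ∑ i, offCharge σ j i * σ ⟨j, by omega⟩ * Real.log (x i - x ⟨j, by omega⟩) := by
  set J : Fin m := ⟨j, by omega⟩ with hJ
  have hs : ∀ i, slopeCharge σ j i = offCharge σ j i + if i = J then 2 * σ J else 0 := by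
    intro i
    unfold slopeCharge
    by_cases h : i = J
    · subst h; simp [hJ]
    · have : i.val ≠ j := fun h' => h (Fin.ext h')
      simp [h, this]
  have hsw : ∀ q, Real.log (x J - x q) = Real.log (x q - x J) := fun q => by
    rw [← neg_sub, Real.log_neg_eq_log]
  unfold coulomb
  simp only [hs, add_mul, mul_add, Finset.sum_add_distrib]
  simp only [ite_mul, mul_ite, zero_mul, mul_zero, Finset.sum_ite_eq', Finset.sum_ite_irrel,
    Finset.sum_const_zero, Finset.mem_univ, if_true, sub_self, Real.log_zero, add_zero, hsw]
  rw [add_assoc]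
  congr 1
  rw [Finset.mul_sum, Finset.mul_sum, ← Finset.sum_add_distrib]
  exact Finset.sum_congr rfl fun i _ => by ring

theorem Ufuse_eq (σ : Fin m → ℝ) {j : ℕ} (hj : j + 1 < m) {x : Fin m → ℝ}
    (hx : x ∈ fusedChamber m j) :
    Ufuse σ j hj x = Real.exp (coulomb (slopeCharge σ j) x) * 1 := by
  unfold Ufuse
  rw [prod_eq_exp_coulomb σ hx, coulomb_slopeCharge σ hj, Real.exp_add, mul_one, Real.exp_sum,
    Finset.prod_filter]
  congr 1
  refine Finset.prod_congr rfl fun i _ => ?_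
  unfold offCharge
  split_ifs with h
  · have hne : x i - x ⟨j, by omega⟩ ≠ 0 :=
      sub_ne_zero.2 (fusedChamber_ne hx (fun h' => h.1 (congrArg Fin.val h')) h.2 (by simp))
    rw [Real.rpow_def_of_pos (abs_pos.2 hne), Real.log_abs, mul_comm]
  · simp

end Blocks

/-! ### The PDE for the fused blocks -/

section BlockPDE

variable {m : ℕ}

/-- Splits a sum over all indices into the indices occurring in the PDE, when the summands at `n`
and at `j + 1` vanish. -/
theorem sum_split {j : ℕ} (hj : j + 1 < m) (n : Fin m) (f : Fin m → ℝ)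
    (hn : f n = 0) (h1 : f ⟨j + 1, hj⟩ = 0) :
    ∑ i, f i = (∑ i ∈ univ.filter (fun i : Fin m => i.val ≠ j ∧ i.val ≠ j + 1 ∧ i ≠ n), f i)
      + f ⟨j, by omega⟩ := by
  rw [← Finset.sum_erase_add _ _ (Finset.mem_univ (⟨j, by omega⟩ : Fin m))]
  congr 1
  symm
  refine Finset.sum_subset (fun i hi => ?_) fun i hi h => ?_
  · exact Finset.mem_erase.2
      ⟨fun h => (Finset.mem_filter.1 hi).2.1 (congrArg Fin.val h), Finset.mem_univ i⟩
  · have hij : i.val ≠ j := fun h => (Finset.mem_erase.1 hi).1 (Fin.ext h)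
    by_cases hin : i = n
    · rw [hin, hn]
    · have : i = ⟨j + 1, hj⟩ := by
        by_contra h'
        exact h (by simpa using ⟨hij, fun h'' => h' (Fin.ext h''), hin⟩)
      rw [this, h1]

theorem Sol_Ufuse {σ : Fin m → ℝ} (hσ : ∀ i, σ i ^ 2 = 1) {j : ℕ} (hj : j + 1 < m) {n : Fin m}
    (hnj : n.val ≠ j) (hnj' : n.val ≠ j + 1) : Sol j hj n (Ufuse σ j hj) := by
  refine Sol.congr ?_ (fun x hx => Ufuse_eq σ hj hx)
  set s := slopeCharge σ j with hs
  have hs1 : ∀ i : Fin m, i.val = j + 1 → s i = 0 := by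
    intro i hi; simp [hs, slopeCharge, offCharge, hi]
  have hsj : s ⟨j, by omega⟩ ^ 2 = 4 := by
    simp [hs, slopeCharge, offCharge, mul_pow, hσ]; norm_num
  have hso : ∀ i : Fin m, i.val ≠ j → i.val ≠ j + 1 → s i ^ 2 = 1 := by
    intro i h h'; simp [hs, slopeCharge, offCharge, h, h', hσ]
  have hsep : ∀ x ∈ fusedChamber m j, Separated s x := fun x hx =>
    separated_of_fusedChamber hs1 hx
  refine Sol.of_exp_mul (A := coulombGrad s) (B := fun _ _ => 0)
    (fun x hx => (hasFDerivAt_coulomb (hsep x hx)).differentiableAt)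
    (fun x hx => differentiableAt_const _)
    (fun i x hx => pd_coulomb (hsep x hx) i)
    (fun i _ x hx => pd_const i 1 x)
    (fun x hx => (hasFDerivAt_coulombGrad (hsep x hx) n).differentiableAt)
    (fun x hx => differentiableAt_const _) hnj' ?_
  intro x hx
  rw [coulomb_identity (hsep x hx) (hso n hnj hnj'), pd_const,
    sum_split hj n _ (by simp) (by simp [hs1, coulombGrad])]
  have : ∀ i ∈ univ.filter (fun i : Fin m => i.val ≠ j ∧ i.val ≠ j + 1 ∧ i ≠ n),
      s i ^ 2 / 4 / (x i - x n) ^ 2 - coulombGrad s i x / (x i - x n)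
      = (1 / 4) * 1 / (x i - x n) ^ 2 - (coulombGrad s i x * 1 + 0) / (x i - x n) := by
    intro i hi
    have := (Finset.mem_filter.1 hi).2
    rw [hso i this.1 this.2.1]; ring
  rw [Finset.sum_congr rfl this, hsj]
  ring

/-- The field `∑ i, s_i / (x_i - x_J)` of the charges `s` at the point `x_J`. -/
def field (s : Fin m → ℝ) (J : Fin m) (x : Fin m → ℝ) : ℝ := ∑ i, s i * (x i - x J)⁻¹

/-- The partial derivative `∂_i` of `field s J`. -/
def fieldGrad (s : Fin m → ℝ) (J i : Fin m) (x : Fin m → ℝ) : ℝ :=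
  if i = J then ∑ k, s k * ((x k - x J) ^ 2)⁻¹ else -(s i * ((x i - x J) ^ 2)⁻¹)

theorem hasFDerivAt_field {s x : Fin m → ℝ} {J : Fin m}
    (h : ∀ i, s i ≠ 0 → x i ≠ x J) :
    HasFDerivAt (field s J) (∑ q, (-(s q * ((x q - x J) ^ 2)⁻¹)) •
      (ContinuousLinearMap.proj (R := ℝ) (φ := fun _ : Fin m => ℝ) q
        - ContinuousLinearMap.proj J)) x := by
  unfold field
  refine HasFDerivAt.fun_sum fun q _ => ?_
  by_cases hq : s q = 0
  · simpa [hq] using hasFDerivAt_const (0 : ℝ) x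
  have hne : x q - x J ≠ 0 := sub_ne_zero.2 (h q hq)
  have h1 : HasFDerivAt (fun y : Fin m → ℝ => y q - y J)
      (ContinuousLinearMap.proj (R := ℝ) (φ := fun _ : Fin m => ℝ) q
        - ContinuousLinearMap.proj J) x :=
    (hasFDerivAt_apply q x).sub (hasFDerivAt_apply J x)
  have h2 := ((hasDerivAt_inv hne).comp_hasFDerivAt x h1).const_mul (s q)
  rw [smul_smul, mul_neg] at h2
  exact h2

theorem pd_field {s x : Fin m → ℝ} {J : Fin m} (h : ∀ i, s i ≠ 0 → x i ≠ x J) (hJ : s J = 0)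
    (i : Fin m) : pd i (field s J) x = fieldGrad s J i x := by
  unfold pd fieldGrad
  rw [(hasFDerivAt_field h).fderiv]
  simp only [_root_.sum_apply, smul_apply,
    sub_apply, ContinuousLinearMap.proj_apply, smul_eq_mul, mul_sub,
    Finset.sum_sub_distrib, Pi.single_apply, mul_ite, mul_one, mul_zero]
  by_cases hi : i = J
  · subst hi; simp [hJ]
  · simp [hi, Ne.symm hi]

theorem hasFDerivAt_fieldGrad {s x : Fin m → ℝ} {J n : Fin m} (hn : n ≠ J) (h : x n ≠ x J) :
    HasFDerivAt (fieldGrad s J n) ((2 * s n * ((x n - x J) ^ 3)⁻¹) •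
      (ContinuousLinearMap.proj (R := ℝ) (φ := fun _ : Fin m => ℝ) n
        - ContinuousLinearMap.proj J)) x := by
  have hne : x n - x J ≠ 0 := sub_ne_zero.2 h
  have h1 : HasFDerivAt (fun y : Fin m → ℝ => y n - y J)
      (ContinuousLinearMap.proj (R := ℝ) (φ := fun _ : Fin m => ℝ) n
        - ContinuousLinearMap.proj J) x :=
    (hasFDerivAt_apply n x).sub (hasFDerivAt_apply J x)
  have h0 : HasDerivAt (fun t : ℝ => -(s n * (t ^ 2)⁻¹)) (2 * s n * ((x n - x J) ^ 3)⁻¹)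
      (x n - x J) := by
    have := ((((hasDerivAt_pow 2 (x n - x J)).inv (pow_ne_zero 2 hne)).const_mul (s n))).neg
    refine HasDerivAt.congr_deriv this ?_
    field_simp
    norm_num
    ring
  have h2 := h0.comp_hasFDerivAt x h1
  have : fieldGrad s J n = (fun t : ℝ => -(s n * (t ^ 2)⁻¹)) ∘ fun y : Fin m → ℝ => y n - y J := by
    ext y; simp [fieldGrad, hn]
  rw [this]
  exact h2

theorem pd_fieldGrad {s x : Fin m → ℝ} {J n : Fin m} (hn : n ≠ J) (h : x n ≠ x J) :
    pd n (fieldGrad s J n) x = 2 * s n * ((x n - x J) ^ 3)⁻¹ := by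
  unfold pd
  rw [(hasFDerivAt_fieldGrad hn h).fderiv]
  simp [Ne.symm hn]

/-- The part of the PDE for `exp (coulomb s) * field s J` left after `coulomb_identity`. -/
theorem vertex_identity {s x : Fin m → ℝ} (h : Separated s x) {J n : Fin m}
    (hxJ : ∀ i, s i ≠ 0 → x i ≠ x J) (hJ : s J = 0) (hn : s n ^ 2 = 1) (hnJ : n ≠ J) :
    2 * coulombGrad s n x * fieldGrad s J n x + pd n (fieldGrad s J n) x =
      -(∑ i, fieldGrad s J i x / (x i - x n)) + field s J x / (x J - x n) ^ 2 := by
  have hn0 : s n ≠ 0 := by rintro h0; simp [h0] at hn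
  have hnx := hxJ n hn0
  have hb : x J - x n ≠ 0 := sub_ne_zero.2 hnx.symm
  -- Isolate `∂_J`; the summand at `J` of the remaining sum vanishes with the charge `s J`.
  have e1 : ∑ i, fieldGrad s J i x / (x i - x n)
      = (∑ k, s k * ((x k - x J) ^ 2)⁻¹) / (x J - x n)
        + ∑ i, -(s i * ((x i - x J) ^ 2)⁻¹) / (x i - x n) := by
    rw [← Finset.sum_erase_add _ _ (Finset.mem_univ J), add_comm]
    congr 1
    · simp [fieldGrad]
    · rw [← Finset.sum_erase_add _ (fun i => -(s i * ((x i - x J) ^ 2)⁻¹) / (x i - x n))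
        (Finset.mem_univ J)]
      simp only [hJ, zero_mul, neg_zero, zero_div, add_zero]
      refine Finset.sum_congr rfl fun i hi => ?_
      simp [fieldGrad, (Finset.mem_erase.1 hi).1]
  have e2 : 2 * coulombGrad s n x * fieldGrad s J n x
      = ∑ i, -(s i * (x n - x i)⁻¹ * ((x n - x J) ^ 2)⁻¹) := by
    simp only [coulombGrad, fieldGrad, hnJ, if_false]
    rw [Finset.sum_neg_distrib, ← Finset.sum_mul]
    simp only [mul_assoc]
    rw [← Finset.mul_sum]
    linear_combination (-(∑ i, s i * (x n - x i)⁻¹) * ((x n - x J) ^ 2)⁻¹) * hn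
  have e3 : 2 * s n * ((x n - x J) ^ 3)⁻¹
      = ∑ i, if i = n then 2 * s n * ((x n - x J) ^ 3)⁻¹ else 0 := by simp
  rw [pd_fieldGrad hnJ hnx, e1, e2, e3, field, Finset.sum_div, Finset.sum_div,
    ← Finset.sum_add_distrib, ← Finset.sum_add_distrib, ← Finset.sum_neg_distrib,
    ← Finset.sum_add_distrib]
  refine Finset.sum_congr rfl fun i _ => ?_
  by_cases hi : s i = 0
  · have : i ≠ n := by rintro rfl; exact hn0 hi
    simp [hi, this]
  have ha : x i - x J ≠ 0 := sub_ne_zero.2 (hxJ i hi)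
  by_cases hin : i = n
  · subst hin
    simp only [sub_self, inv_zero, if_true, div_zero]
    rw [← neg_sub (x i) (x J)]
    field_simp
    ring
  · have hc : x i - x n ≠ 0 := sub_ne_zero.2 (h i n hin hi hn0)
    simp only [hin, if_false]
    rw [← neg_sub (x i) (x n), ← neg_sub (x J) (x n)]
    have hab : x i - x n = (x i - x J) + (x J - x n) := by ring
    rw [hab] at hc ⊢
    generalize x i - x J = a at *
    generalize x J - x n = b at *
    rw [inv_neg]
    field_simp
    ring

theorem Sol_Vfuse {σ : Fin m → ℝ} (hσ : ∀ i, σ i ^ 2 = 1) {j : ℕ} (hj : j + 1 < m) {n : Fin m}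
    (hnj : n.val ≠ j) (hnj' : n.val ≠ j + 1) : Sol j hj n (Vfuse σ j hj) := by
  set J : Fin m := ⟨j, by omega⟩ with hJ
  set s := offCharge σ j with hs
  suffices H : Sol j hj n (fun x => Real.exp (coulomb s x) * field s J x) by
    refine (H.const_mul (σ J)).congr fun x hx => ?_
    rw [Vfuse_eq σ hj hx, field]
    ring
  have hs1 : ∀ i : Fin m, i.val = j + 1 → s i = 0 := by
    intro i hi; simp [hs, offCharge, hi]
  have hsj : s J = 0 := by simp [hs, offCharge, hJ]
  have hso : ∀ i : Fin m, i.val ≠ j → i.val ≠ j + 1 → s i ^ 2 = 1 := by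
    intro i h h'; simp [hs, offCharge, h, h', hσ]
  have hsep : ∀ x ∈ fusedChamber m j, Separated s x := fun x hx =>
    separated_of_fusedChamber hs1 hx
  have hxJ : ∀ x ∈ fusedChamber m j, ∀ i, s i ≠ 0 → x i ≠ x J := by
    intro x hx i hi
    refine fusedChamber_ne hx (fun h => hi (h ▸ hsj)) (fun h => hi (hs1 i h)) (by simp [hJ])
  have hnJ : n ≠ J := fun h => hnj (by rw [h])
  have hn2 := hso n hnj hnj'
  have hn0 : s n ≠ 0 := by rintro h0; simp [h0] at hn2
  refine Sol.of_exp_mul (A := coulombGrad s) (B := fieldGrad s J)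
    (fun x hx => (hasFDerivAt_coulomb (hsep x hx)).differentiableAt)
    (fun x hx => (hasFDerivAt_field (hxJ x hx)).differentiableAt)
    (fun i x hx => pd_coulomb (hsep x hx) i)
    (fun i _ x hx => pd_field (hxJ x hx) hsj i)
    (fun x hx => (hasFDerivAt_coulombGrad (hsep x hx) n).differentiableAt)
    (fun x hx => (hasFDerivAt_fieldGrad hnJ (hxJ x hx n hn0)).differentiableAt) hnj' ?_
  intro x hx
  rw [add_assoc, vertex_identity (hsep x hx) (hxJ x hx) hsj hn2 hnJ,
    coulomb_identity (hsep x hx) hn2,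
    sum_split hj n _ (by simp) (by simp [hs1, coulombGrad]),
    sum_split hj n (fun i => fieldGrad s J i x / (x i - x n)) (by simp)
      (by simp [hs1, fieldGrad, hJ])]
  have : ∀ i ∈ univ.filter (fun i : Fin m => i.val ≠ j ∧ i.val ≠ j + 1 ∧ i ≠ n),
      (1 / 4) * field s J x / (x i - x n) ^ 2
        - (coulombGrad s i x * field s J x + fieldGrad s J i x) / (x i - x n)
      = (s i ^ 2 / 4 / (x i - x n) ^ 2 - coulombGrad s i x / (x i - x n)) * field s J x
        - fieldGrad s J i x / (x i - x n) := by
    intro i hi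
    have := (Finset.mem_filter.1 hi).2
    rw [hso i this.1 this.2.1]; ring
  rw [Finset.sum_congr rfl this,
    Finset.sum_sub_distrib (fun i => _ * field s J x), ← Finset.sum_mul, ← hJ, hsj]
  ring

end BlockPDE

theorem pairSign_sq {N : ℕ} (β : PlanarPair N) (i : Fin (2 * N)) : pairSign β i ^ 2 = 1 := by
  unfold pairSign
  split_ifs <;> norm_num

/-- The fused partition function `Z_{α/⨿_j}` satisfies the second-order
PDEs (κ = 4, h = 1/4, H = 1) in the unfused variables. The fusion point `ξ` is the
coordinate `j` of the configuration, and coordinate `j+1` is ignored. -/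
theorem Zfuse_secondOrderPDE (N : ℕ) (hN : 1 ≤ N) (α : PlanarPair N)
    (j : ℕ) (hj : j + 1 < 2 * N)
    (hlink : α.val ⟨j, by omega⟩ ≠ ⟨j + 1, hj⟩) :
    ∀ n : Fin (2 * N), n.val ≠ j → n.val ≠ j + 1 →
      ∀ x ∈ fusedChamber (2 * N) j,
        pd n (pd n (Zfuse α j hj)) x =
          (∑ i ∈ univ.filter (fun i : Fin (2 * N) =>
              i.val ≠ j ∧ i.val ≠ j + 1 ∧ i ≠ n),
            ((1 / 4) * Zfuse α j hj x / (x i - x n) ^ 2 -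
              pd i (Zfuse α j hj) x / (x i - x n))) +
          Zfuse α j hj x / (x ⟨j, by omega⟩ - x n) ^ 2 -
          pd ⟨j, by omega⟩ (Zfuse α j hj) x / (x ⟨j, by omega⟩ - x n) := by
  intro n hnj hnj' x hx
  have h : Sol j hj n (Zfuse α j hj) :=
    (Sol.sum _ fun β _ => (Sol_Vfuse (pairSign_sq β) hj hnj hnj').const_mul _).add
      (Sol.sum _ fun β _ => (Sol_Ufuse (pairSign_sq β) hj hnj hnj').const_mul _)
  exact (h x hx).2.2
end
end
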